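/- Let ψ_0, ψ_1 ∈ S(ℝ^n) satisfy |ψ_0(x)| > 0 on {|x| ≤ kε} and |ψ_1(x)| > 0 on {ε ≤ |x| ≤ 2kε} for some ε > 0 and k ∈ (1,2]; set ψ_j(x) := ψ_1(2^{−j+1}x) for j ≥ 2 and Ψ_j := ψ̂_j. Let t > 0, N ∈ ℕ_0 and 0 < a ≤ N. Then there exists c > 0 such that for every f ∈ S'(ℝ^n), every ν ∈ ℕ_0 and every x ∈ ℝ^n: ((Ψ_ν^* f)_a(x))^t ≤ c ∑_{j=0}^∞ 2^{−jNt} 2^{(j+ν)n} ∫_{ℝ^n} |(Ψ_{j+ν} ∗ f)(z)|^t / (1 + |2^ν(x−z)|^a)^t dz. -/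

import Mathlib

open MeasureTheory ENNReal Real
open scoped FourierTransform

noncomputable section

/-- Euclidean space `ℝ^n`. -/
abbrev Rn (n : ℕ) : Type := EuclideanSpace ℝ (Fin n)

variable {n : ℕ}

/-- The function `φ_t(s)` used in the semimodular of variable exponent Lebesgue spaces:
`φ_t(s) = s^t` for `t < ∞`, while `φ_∞(s) = 0` for `s ≤ 1` and `= ∞` for `s > 1`. -/
def phiVE (t : ℝ≥0∞) (s : ℝ≥0∞) : ℝ≥0∞ :=
  if t = ∞ then (if s ≤ 1 then 0 else ∞) else s ^ t.toReal

/-- The semimodular `ρ_p` of variable exponent Lebesgue spaces. -/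
def modularVE (p : Rn n → ℝ≥0∞) (g : Rn n → ℝ≥0∞) : ℝ≥0∞ :=
  ∫⁻ x, phiVE (p x) (g x)

/-- The variable exponent Lebesgue quasi-norm `‖·‖_{L^{p(·)}(ℝ^n)}`, applied to the
(pointwise) absolute value of a function, i.e. to `[0,∞]`-valued functions.
(For `p⁻ ≥ 1` this is the usual Luxemburg norm; for general `p` it agrees with the
definition via `‖f‖ = ‖|f|^t‖_{L^{p/t}}^{1/t}`.) -/
def vLpNorm (p : Rn n → ℝ≥0∞) (g : Rn n → ℝ≥0∞) : ℝ≥0∞ :=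
  sInf {lam : ℝ≥0∞ | modularVE p (fun x => g x / lam) ≤ 1}

/-- A variable exponent: a measurable function `p : ℝ^n → (0,∞]` with `p⁻ = ess inf p > 0`. -/
def IsVarExp (p : Rn n → ℝ≥0∞) : Prop :=
  Measurable p ∧ (∀ x, 0 < p x) ∧ 0 < essInf p (volume : Measure (Rn n))

/-- Local log-Hölder continuity of `g : ℝ^n → ℝ`. -/
def LocLogHolder (g : Rn n → ℝ) : Prop :=
  ∃ c > 0, ∀ x y : Rn n, |g x - g y| ≤ c / Real.log (Real.exp 1 + (dist x y)⁻¹)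

/-- Log-Hölder decay of `g` at infinity, with limit value `gInf` and constant `c`. -/
def LogDecay (g : Rn n → ℝ) (gInf c : ℝ) : Prop :=
  ∀ x : Rn n, |g x - gInf| ≤ c / Real.log (Real.exp 1 + ‖x‖)

/-- `p ∈ P^log(ℝ^n)`, with prescribed limit value `pinvInf = 1/p_∞` of `1/p` at infinity. -/
def IsPLogWith (p : Rn n → ℝ≥0∞) (pinvInf : ℝ) : Prop :=
  IsVarExp p ∧ LocLogHolder (fun x => (p x)⁻¹.toReal) ∧
    ∃ c > 0, LogDecay (fun x => (p x)⁻¹.toReal) pinvInf c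

/-- `p ∈ P^log(ℝ^n)`. -/
def IsPLog (p : Rn n → ℝ≥0∞) : Prop := ∃ pinvInf : ℝ, IsPLogWith p pinvInf

/-- The Morrey quasi-norm `‖·‖_{M^{u(·)}_{p(·)}(ℝ^n)}` of a `[0,∞]`-valued function:
`sup_{x, r>0} r^{n(1/u(x) - 1/p(x))} ‖f‖_{L^{p(·)}(B_r(x))}`. -/
def morreyNorm (p u : Rn n → ℝ≥0∞) (g : Rn n → ℝ≥0∞) : ℝ≥0∞ :=
  ⨆ (x : Rn n) (r : ℝ) (_ : 0 < r),
    ENNReal.ofReal (r ^ ((n : ℝ) * ((u x)⁻¹.toReal - (p x)⁻¹.toReal))) *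
      vLpNorm p ((Metric.ball x r).indicator g)

/-- The `ℓ^q` (quasi-)norm of a sequence in `[0,∞]`, with the usual modification for `q = ∞`. -/
def lqNorm (q : ℝ≥0∞) (a : ℕ → ℝ≥0∞) : ℝ≥0∞ :=
  if q = ∞ then ⨆ ν, a ν else (∑' ν, a ν ^ q.toReal) ^ (1 / q.toReal)

/-- The vector-valued Morrey quasi-norm `‖(f_ν)_ν‖_{M^{u(·)}_{p(·)}(ℓ^{q(·)})}`. -/
def morreySeqNorm (p u q : Rn n → ℝ≥0∞) (f : ℕ → Rn n → ℝ≥0∞) : ℝ≥0∞ :=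
  morreyNorm p u (fun x => lqNorm (q x) (fun ν => f ν x))

/-- The kernel `η_{ν,m}(x) = 2^{νn} (1 + 2^ν |x|)^{-m}`. -/
def etaK (ν : ℕ) (m : ℝ) (x : Rn n) : ℝ≥0∞ :=
  ENNReal.ofReal ((2 : ℝ) ^ (ν * n) * (1 + 2 ^ ν * ‖x‖) ^ (-m))

/-- Convolution of `[0,∞]`-valued functions. -/
def lconv (f g : Rn n → ℝ≥0∞) (x : Rn n) : ℝ≥0∞ := ∫⁻ y, f (x - y) * g y

/-- The constant `c_{p,u} = max(0, sup_x (1/p(x) - 1/u(x)) - 1/p_∞)`. -/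
def cpu (p u : Rn n → ℝ≥0∞) (pinvInf : ℝ) : ℝ :=
  max 0 ((⨆ x : Rn n, ((p x)⁻¹.toReal - (u x)⁻¹.toReal)) - pinvInf)

/-- Tempered distributions on `ℝ^n`. -/
abbrev TemperedDist (n : ℕ) : Type := SchwartzMap (Rn n) ℂ →L[ℂ] ℂ

lemma hasTemperateGrowth_reflectTranslate (y : Rn n) :
    Function.HasTemperateGrowth (fun z : Rn n => y - z) := by
  have hd : Differentiable ℝ (fun z : Rn n => y - z) :=
    (differentiable_const y).sub differentiable_id
  have hfd : fderiv ℝ (fun z : Rn n => y - z)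
      = fun _ => -(ContinuousLinearMap.id ℝ (Rn n)) := by
    funext z
    rw [fderiv_const_sub, fderiv_id']
  refine Function.HasTemperateGrowth.of_fderiv (k := 1) (C := ‖y‖ + 1) ?_ hd ?_
  · rw [hfd]; exact .const _
  · intro x
    calc ‖y - x‖ ≤ ‖y‖ + ‖x‖ := norm_sub_le _ _
      _ ≤ (‖y‖ + 1) * (1 + ‖x‖) ^ 1 := by
          have h1 := norm_nonneg x
          have h2 := norm_nonneg y
          nlinarith

/-- The map `z ↦ Ψ (y - z)`, as a Schwartz function. -/
def reflectTranslate (y : Rn n) (Ψ : SchwartzMap (Rn n) ℂ) : SchwartzMap (Rn n) ℂ :=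
  SchwartzMap.compCLMOfAntilipschitz (𝕜 := ℂ) (K := 1)
    (hasTemperateGrowth_reflectTranslate y)
    ((Isometry.of_dist_eq (fun z z' => dist_sub_left y z z')).antilipschitz) Ψ

@[simp] lemma reflectTranslate_apply (y : Rn n) (Ψ : SchwartzMap (Rn n) ℂ) (z : Rn n) :
    reflectTranslate y Ψ z = Ψ (y - z) := rfl

/-- The convolution `(Ψ ∗ f)(y) = f(Ψ(y - ·))` of a Schwartz function `Ψ` with a tempered
distribution `f`. -/
def distConv (Ψ : SchwartzMap (Rn n) ℂ) (f : TemperedDist n) (y : Rn n) : ℂ :=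
  f (reflectTranslate y Ψ)

/-- The Peetre maximal function at level `j`, with parameter `a`, of a function `F`
(to be applied with `F = Ψ_j ∗ f`):  `sup_y ‖F y‖ / (1 + |2^j (y - x)|^a)`. -/
def peetreMax (a : ℝ) (j : ℕ) (F : Rn n → ℂ) (x : Rn n) : ℝ≥0∞ :=
  ⨆ y : Rn n, (‖F y‖₊ : ℝ≥0∞) / ENNReal.ofReal (1 + ((2 : ℝ) ^ j * ‖y - x‖) ^ a)

/-- Admissible weight sequences from the class `W^α_{α₁,α₂}`, with constant `C` in
condition (i). -/
def AdmissibleWeights (al al1 al2 C : ℝ) (w : ℕ → Rn n → ℝ) : Prop :=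
  (∀ j, Measurable (w j)) ∧
  (∀ (j : ℕ) (x y : Rn n), 0 < w j x ∧ w j x ≤ C * w j y * (1 + 2 ^ j * ‖x - y‖) ^ al) ∧
  (∀ (j : ℕ) (x : Rn n), 2 ^ al1 * w j x ≤ w (j + 1) x ∧ w (j + 1) x ≤ 2 ^ al2 * w j x)

/-- An admissible pair `(φ̌, Φ̌)`, described through the generating functions `φ, Φ`. -/
def AdmissiblePair (phi Phi : SchwartzMap (Rn n) ℂ) : Prop :=
  (Function.support ⇑phi ⊆ {x : Rn n | 1 / 2 ≤ ‖x‖ ∧ ‖x‖ ≤ 2}) ∧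
  (Function.support ⇑Phi ⊆ {x : Rn n | ‖x‖ ≤ 2}) ∧
  ∃ c > 0, (∀ x : Rn n, 3 / 5 ≤ ‖x‖ → ‖x‖ ≤ 5 / 3 → c ≤ ‖phi x‖) ∧
    (∀ x : Rn n, ‖x‖ ≤ 5 / 3 → c ≤ ‖Phi x‖)

section

open Function FourierTransform LineDeriv

/-- `Ψ ↦ Ψ (y - ·)` as a continuous linear map on the Schwartz space. -/
def reflectTranslateCLM (y : Rn n) : SchwartzMap (Rn n) ℂ →L[ℂ] SchwartzMap (Rn n) ℂ :=
  SchwartzMap.compCLMOfAntilipschitz (𝕜 := ℂ) (K := 1)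
    (hasTemperateGrowth_reflectTranslate y)
    ((Isometry.of_dist_eq (fun z z' => dist_sub_left y z z')).antilipschitz)

lemma reflectTranslateCLM_apply (y : Rn n) (Ψ : SchwartzMap (Rn n) ℂ) :
    reflectTranslateCLM y Ψ = reflectTranslate y Ψ := rfl

lemma norm_iteratedFDeriv_comp_const_sub (Ψ : SchwartzMap (Rn n) ℂ) (l : ℕ) (y x : Rn n) :
    ‖iteratedFDeriv ℝ l (fun w => Ψ (y - w)) x‖ = ‖iteratedFDeriv ℝ l Ψ (y - x)‖ := by
  have h : (fun w => Ψ (y - w)) =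
      (fun w => Ψ (w + y)) ∘ (LinearIsometryEquiv.neg ℝ : Rn n ≃ₗᵢ[ℝ] Rn n) := by
    funext w; simp [add_comm, sub_eq_add_neg]
  rw [h, LinearIsometryEquiv.norm_iteratedFDeriv_comp_right, iteratedFDeriv_comp_add_right]
  simp [add_comm, sub_eq_add_neg]

lemma one_add_norm_le_mul (y x : Rn n) : 1 + ‖x‖ ≤ (1 + ‖y‖) * (1 + ‖y - x‖) := by
  have h : ‖x‖ ≤ ‖y‖ + ‖y - x‖ := by
    have := norm_sub_le y (y - x); simpa using this
  nlinarith [norm_nonneg y, norm_nonneg (y - x)]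

lemma seminorm_reflectTranslate_le (k l : ℕ) (y : Rn n) (Ψ : SchwartzMap (Rn n) ℂ) :
    SchwartzMap.seminorm ℂ k l (reflectTranslate y Ψ) ≤ (1 + ‖y‖) ^ k *
      (2 ^ k * (Finset.Iic (k, l)).sup (fun m => SchwartzMap.seminorm ℂ m.1 m.2) Ψ) := by
  refine SchwartzMap.seminorm_le_bound ℂ k l _ (by positivity) fun x => ?_
  have h1 : ‖iteratedFDeriv ℝ l (reflectTranslate y Ψ) x‖ = ‖iteratedFDeriv ℝ l Ψ (y - x)‖ :=
    norm_iteratedFDeriv_comp_const_sub Ψ l y x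
  have h2 := SchwartzMap.one_add_le_sup_seminorm_apply (𝕜 := ℂ) (m := (k, l)) le_rfl le_rfl Ψ
    (y - x)
  rw [h1]
  calc ‖x‖ ^ k * ‖iteratedFDeriv ℝ l Ψ (y - x)‖
      ≤ ((1 + ‖y‖) * (1 + ‖y - x‖)) ^ k * ‖iteratedFDeriv ℝ l Ψ (y - x)‖ := by
        gcongr
        have := one_add_norm_le_mul y x
        linarith
    _ = (1 + ‖y‖) ^ k * ((1 + ‖y - x‖) ^ k * ‖iteratedFDeriv ℝ l Ψ (y - x)‖) := by
        rw [mul_pow, mul_assoc]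
    _ ≤ _ := by gcongr

lemma seminorm_comp_add_sub_le (k l : ℕ) (Ψ : SchwartzMap (Rn n) ℂ) (h : Rn n) (hh : ‖h‖ ≤ 1) :
    SchwartzMap.seminorm ℂ k l (SchwartzMap.compSubConstCLM ℂ (-h) Ψ - Ψ) ≤
      2 ^ k * (2 ^ k * (Finset.Iic (k, l + 1)).sup
        (fun m => SchwartzMap.seminorm ℂ m.1 m.2) Ψ) * ‖h‖ := by
  refine SchwartzMap.seminorm_le_bound ℂ k l _ (by positivity) fun x => ?_
  have hd : ContDiff ℝ l (fun z => Ψ (z + h)) :=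
    (Ψ.smooth l).comp (contDiff_id.add contDiff_const)
  have h1 : iteratedFDeriv ℝ l (⇑(SchwartzMap.compSubConstCLM ℂ (-h) Ψ - Ψ)) x =
      iteratedFDeriv ℝ l Ψ (x + h) - iteratedFDeriv ℝ l Ψ x := by
    have : (⇑(SchwartzMap.compSubConstCLM ℂ (-h) Ψ - Ψ)) = (fun z => Ψ (z + h)) - ⇑Ψ := by
      funext z; simp [SchwartzMap.compSubConstCLM_apply]
    rw [this, iteratedFDeriv_sub_apply hd.contDiffAt (Ψ.smooth l).contDiffAt,
      iteratedFDeriv_comp_add_right]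
  rw [h1]
  set C := 2 ^ k * (Finset.Iic (k, l + 1)).sup
        (fun m => SchwartzMap.seminorm ℂ m.1 m.2) Ψ with hC
  have hsmooth := Ψ.smooth ⊤
  have hdiff : Differentiable ℝ (iteratedFDeriv ℝ l Ψ) :=
    hsmooth.differentiable_iteratedFDeriv (by exact_mod_cast WithTop.coe_lt_top _)
  have hx : ∀ w ∈ segment ℝ x (x + h), (‖x‖) ^ k * ‖fderiv ℝ (iteratedFDeriv ℝ l Ψ) w‖ ≤
      2 ^ k * C := by
    intro w hw
    have h3 := SchwartzMap.one_add_le_sup_seminorm_apply (𝕜 := ℂ) (m := (k, l + 1)) le_rfl le_rfl Ψ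
      w
    have h4 : ‖x - w‖ ≤ 1 := by
      have := norm_sub_le_of_mem_segment hw
      have h5 : ‖w - x‖ ≤ ‖h‖ := by simpa using this
      rw [norm_sub_rev]; linarith
    have h6 : ‖x‖ ≤ 2 * (1 + ‖w‖) := by
      have := norm_add_le (x - w) w
      simp only [sub_add_cancel] at this
      linarith [norm_nonneg w]
    rw [norm_fderiv_iteratedFDeriv]
    calc _ ≤ (2 * (1 + ‖w‖)) ^ k * ‖iteratedFDeriv ℝ (l + 1) Ψ w‖ := by gcongr
      _ = 2 ^ k * ((1 + ‖w‖) ^ k * ‖iteratedFDeriv ℝ (l + 1) Ψ w‖) := by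
        rw [mul_pow, mul_assoc]
      _ ≤ _ := by gcongr
  have hseg := (convex_segment x (x + h)).norm_image_sub_le_of_norm_fderiv_le (𝕜 := ℝ)
    (f := fun w => (‖x‖ ^ k) • iteratedFDeriv ℝ l Ψ w) (C := 2 ^ k * C)
    (fun w _ => (hdiff w).fun_const_smul _) (fun w hw => by
      rw [fderiv_fun_const_smul (hdiff w), norm_smul]
      simpa using hx w hw) (left_mem_segment ℝ _ _) (right_mem_segment ℝ _ _)
  rw [← smul_sub, norm_smul] at hseg
  simpa using hseg

lemma continuous_reflectTranslate (Ψ : SchwartzMap (Rn n) ℂ) :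
    Continuous (fun y : Rn n => reflectTranslate y Ψ) := by
  rw [continuous_iff_continuousAt]
  intro y₀
  have key : Filter.Tendsto (fun h : Rn n => SchwartzMap.compSubConstCLM ℂ (-h) Ψ)
      (nhds 0) (nhds Ψ) := by
    rw [(schwartz_withSeminorms ℂ (Rn n) ℂ).tendsto_nhds]
    rintro ⟨k, l⟩ ε hε
    set C := 2 ^ k * (2 ^ k * (Finset.Iic (k, l + 1)).sup
        (fun m => SchwartzMap.seminorm ℂ m.1 m.2) Ψ) with hC
    have hC0 : 0 ≤ C := by positivity
    have : Filter.Tendsto (fun h : Rn n => C * ‖h‖) (nhds 0) (nhds 0) := by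
      have : Continuous (fun h : Rn n => C * ‖h‖) := by fun_prop
      simpa using this.tendsto 0
    filter_upwards [this.eventually (gt_mem_nhds hε), Metric.closedBall_mem_nhds (0 : Rn n) one_pos]
      with h hh h1
    exact (seminorm_comp_add_sub_le k l Ψ h (by simpa using h1)).trans_lt hh
  have h2 : Filter.Tendsto (fun y : Rn n => y - y₀) (nhds y₀) (nhds 0) := by
    have : Continuous (fun y : Rn n => y - y₀) := by fun_prop
    simpa using this.tendsto y₀
  have h3 := ((reflectTranslateCLM y₀).continuous.tendsto Ψ).comp (key.comp h2)
  refine h3.congr fun y => ?_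
  ext x
  simp only [Function.comp_apply, reflectTranslateCLM_apply, reflectTranslate_apply,
    SchwartzMap.compSubConstCLM_apply]
  congr 1
  abel

lemma continuous_distConv (Ψ : SchwartzMap (Rn n) ℂ) (f : TemperedDist n) :
    Continuous (distConv Ψ f) :=
  f.continuous.comp (continuous_reflectTranslate Ψ)

/-- Bounded continuous functions with values in a normed group. -/
abbrev BddCont (E F : Type) [TopologicalSpace E] [NormedAddCommGroup F] : Type :=
  BoundedContinuousFunction E F

/-- Finite families of bounded continuous functions with values in multilinear forms. -/
abbrev MultilinearFamily (n : ℕ) (s : Finset (ℕ × ℕ)) : Type :=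
  ∀ i : s, BddCont (Rn n) (ContinuousMultilinearMap ℝ (fun _ : Fin i.1.2 => Rn n) ℂ)

/-- The weighted derivative `x ↦ |x|^k D^l φ(x)` of a Schwartz function, as a bounded continuous
function. -/
def weightedDeriv (k l : ℕ) (φ : SchwartzMap (Rn n) ℂ) :
    BddCont (Rn n) (ContinuousMultilinearMap ℝ (fun _ : Fin l => Rn n) ℂ) :=
  BoundedContinuousFunction.ofNormedAddCommGroup
    (fun x => (‖x‖ ^ k) • iteratedFDeriv ℝ l φ x)
    ((continuous_norm.pow k).smul ((φ.smooth ⊤).continuous_iteratedFDeriv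
      (by exact_mod_cast le_top)))
    (SchwartzMap.seminorm ℂ k l φ) (fun x => by
      rw [norm_smul]
      simpa using SchwartzMap.le_seminorm ℂ k l φ x)

lemma weightedDeriv_apply (k l : ℕ) (φ : SchwartzMap (Rn n) ℂ) (x : Rn n) :
    weightedDeriv k l φ x = (‖x‖ ^ k) • iteratedFDeriv ℝ l φ x := rfl

lemma norm_weightedDeriv_le (k l : ℕ) (φ : SchwartzMap (Rn n) ℂ) :
    ‖weightedDeriv k l φ‖ ≤ SchwartzMap.seminorm ℂ k l φ := by
  refine (BoundedContinuousFunction.norm_le (apply_nonneg _ _)).2 fun x => ?_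
  rw [weightedDeriv_apply, norm_smul]
  simpa using SchwartzMap.le_seminorm ℂ k l φ x

lemma seminorm_le_norm_weightedDeriv (k l : ℕ) (φ : SchwartzMap (Rn n) ℂ) :
    SchwartzMap.seminorm ℂ k l φ ≤ ‖weightedDeriv k l φ‖ := by
  refine SchwartzMap.seminorm_le_bound ℂ k l φ (norm_nonneg (weightedDeriv k l φ)) fun x => ?_
  have := (weightedDeriv k l φ).norm_coe_le_norm x
  rw [weightedDeriv_apply, norm_smul] at this
  simpa using this

/-- The bounded continuous weighted derivatives with indices in a finite set, jointly. -/
def weightedDerivs (s : Finset (ℕ × ℕ)) : SchwartzMap (Rn n) ℂ →ₗ[ℂ]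
    MultilinearFamily n s where
  toFun φ i := weightedDeriv i.1.1 i.1.2 φ
  map_add' φ φ' := by
    funext i; ext1 x
    simp only [Pi.add_apply, BoundedContinuousFunction.add_apply, weightedDeriv_apply,
      FunLike.coe_add]
    rw [iteratedFDeriv_add_apply (φ.smooth _).contDiffAt (φ'.smooth _).contDiffAt, smul_add]
  map_smul' c φ := by
    funext i; ext1 x
    simp only [Pi.smul_apply, BoundedContinuousFunction.smul_apply, weightedDeriv_apply,
      RingHom.id_apply, FunLike.coe_smul]
    rw [iteratedFDeriv_const_smul_apply (φ.smooth _).contDiffAt, smul_comm]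

lemma weightedDerivs_apply (s : Finset (ℕ × ℕ)) (φ : SchwartzMap (Rn n) ℂ) (i : s) :
    weightedDerivs s φ i = weightedDeriv i.1.1 i.1.2 φ := rfl

lemma continuous_weightedDerivs (s : Finset (ℕ × ℕ)) :
    Continuous (weightedDerivs (n := n) s) := by
  refine continuous_pi fun i => ?_
  have h : Continuous ((LinearMap.proj i).comp (weightedDerivs (n := n) s)) := by
    refine WithSeminorms.continuous_normedSpace_rng _ (schwartz_withSeminorms ℂ (Rn n) ℂ) _
      ⟨{i.1}, 1, ?_⟩
    intro φ
    simpa using! norm_weightedDeriv_le i.1.1 i.1.2 φ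
  exact h

/-- A functional that is bounded by the norm of a linear map factors through it. -/
lemma exists_factor_of_norm_le {V E : Type*} [AddCommGroup V] [Module ℂ V] [NormedAddCommGroup E]
    [NormedSpace ℂ E] (f : V →ₗ[ℂ] ℂ) (T : V →ₗ[ℂ] E) (C : ℝ) (h : ∀ v, ‖f v‖ ≤ C * ‖T v‖) :
    ∃ L : E →L[ℂ] ℂ, ∀ v, f v = L (T v) := by
  have hker : LinearMap.ker T ≤ LinearMap.ker f := fun v hv => by
    have := h v
    rw [LinearMap.mem_ker] at hv ⊢
    simpa [hv] using this
  let g : LinearMap.range T →ₗ[ℂ] ℂ :=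
    ((LinearMap.ker T).liftQ f hker).comp T.quotKerEquivRange.symm.toLinearMap
  have hg : ∀ v, g ⟨T v, LinearMap.mem_range_self T v⟩ = f v := by
    intro v
    have : T.quotKerEquivRange.symm ⟨T v, LinearMap.mem_range_self T v⟩ =
        (LinearMap.ker T).mkQ v := T.quotKerEquivRange_symm_apply_image v _
    simp [g, this]
  let g' : LinearMap.range T →L[ℂ] ℂ := g.mkContinuous C (by
    rintro ⟨-, v, rfl⟩
    rw [hg]
    exact h v)
  obtain ⟨L, hL, -⟩ := exists_extension_norm_eq _ g'
  exact ⟨L, fun v => (hg v).symm.trans (hL ⟨T v, LinearMap.mem_range_self T v⟩).symm⟩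

/-- A tempered distribution factors through finitely many weighted derivatives. -/
lemma exists_factor_weightedDerivs (f : TemperedDist n) : ∃ (s : Finset (ℕ × ℕ))
    (L : MultilinearFamily n s →L[ℂ] ℂ),
    ∀ φ, f φ = L (weightedDerivs s φ) := by
  obtain ⟨s, C, -, hC⟩ := Seminorm.bound_of_continuous (schwartz_withSeminorms ℂ (Rn n) ℂ)
    ((normSeminorm ℂ ℂ).comp f.toLinearMap) (by
      exact continuous_norm.comp f.continuous)
  obtain ⟨L, hL⟩ := exists_factor_of_norm_le f.toLinearMap (weightedDerivs s) C (by
    intro φ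
    have h1 : ‖f φ‖ ≤ (C • s.sup (schwartzSeminormFamily ℂ (Rn n) ℂ)) φ := hC φ
    refine h1.trans ?_
    simp only [smul_apply, NNReal.smul_def, smul_eq_mul]
    gcongr
    refine Seminorm.finset_sup_apply_le (norm_nonneg _) fun i hi => ?_
    exact (seminorm_le_norm_weightedDeriv i.1 i.2 φ).trans
      (norm_le_pi_norm (weightedDerivs s φ) ⟨i, hi⟩))
  exact ⟨s, L, hL⟩

/-- A tempered distribution commutes with a Schwartz-valued integral. -/
lemma map_integral_of_iteratedFDeriv (f : TemperedDist n) (K : Rn n → ℂ)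
    (Φ : Rn n → SchwartzMap (Rn n) ℂ)
    (Θ : SchwartzMap (Rn n) ℂ) (hK : Continuous K) (hΦ : Continuous Φ)
    (hint : ∀ k l, ∃ g : Rn n → ℝ, Integrable g ∧
      ∀ z, ‖K z‖ * SchwartzMap.seminorm ℂ k l (Φ z) ≤ g z)
    (hΘ : ∀ l x m, iteratedFDeriv ℝ l Θ x m = ∫ z, K z * iteratedFDeriv ℝ l (Φ z) x m) :
    f Θ = ∫ z, K z * f (Φ z) := by
  obtain ⟨s, L, hL⟩ := exists_factor_weightedDerivs f
  have hcont : Continuous (fun z => K z • weightedDerivs s (Φ z)) :=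
    hK.smul ((continuous_weightedDerivs s).comp hΦ)
  have : SecondCountableTopologyEither (Rn n) (MultilinearFamily n s) := ⟨Or.inl inferInstance⟩
  have hi : Integrable (fun z => K z • weightedDerivs s (Φ z)) := by
    choose g hg hle using hint
    refine Integrable.mono' (g := fun z => ∑ i ∈ s, g i.1 i.2 z)
      (integrable_finsetSum _ fun i _ => hg i.1 i.2) hcont.aestronglyMeasurable
      (Filter.Eventually.of_forall fun z => ?_)
    have hnn : ∀ i : ℕ × ℕ, 0 ≤ g i.1 i.2 z := fun i =>
      (mul_nonneg (norm_nonneg _) (apply_nonneg _ _)).trans (hle i.1 i.2 z)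
    refine (pi_norm_le_iff_of_nonneg (Finset.sum_nonneg fun i _ => hnn i)).2 fun i => ?_
    rw [Pi.smul_apply, norm_smul]
    refine le_trans ?_ (Finset.single_le_sum (fun i _ => hnn i) i.2)
    refine le_trans ?_ (hle i.1.1 i.1.2 z)
    gcongr
    exact norm_weightedDeriv_le _ _ _
  have hΘ' : weightedDerivs s Θ = ∫ z, K z • weightedDerivs s (Φ z) := by
    funext i; ext x m
    let ev : MultilinearFamily n s →L[ℝ] ℂ :=
      (ContinuousMultilinearMap.apply ℝ (fun _ : Fin i.1.2 => Rn n) ℂ m).comp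
        ((BoundedContinuousFunction.evalCLM ℝ x).comp (ContinuousLinearMap.proj i))
    have h1 := ev.integral_comp_comm hi
    have h2 : ∀ v, ev v = v i x m := fun v => rfl
    rw [← h2, ← h2, ← h1]
    simp only [h2, Pi.smul_apply, BoundedContinuousFunction.smul_apply, weightedDerivs_apply,
      weightedDeriv_apply, smul_apply, hΘ]
    rw [← integral_smul]
    refine integral_congr_ae (Filter.Eventually.of_forall fun z => ?_)
    simp only [smul_eq_mul, Complex.real_smul]
    ring
  rw [hL, hΘ', ← L.integral_comp_comm hi]
  simp [hL]

/-- Pointwise product of Schwartz functions. -/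
abbrev schwartzMul (κ ψ : SchwartzMap (Rn n) ℂ) : SchwartzMap (Rn n) ℂ :=
  SchwartzMap.pairing (ContinuousLinearMap.mul ℂ ℂ) κ ψ

lemma schwartzMul_apply (κ ψ : SchwartzMap (Rn n) ℂ) (x : Rn n) :
    schwartzMul κ ψ x = κ x * ψ x := rfl

lemma fourier_schwartzMul_apply (κ ψ : SchwartzMap (Rn n) ℂ) (x : Rn n) :
    𝓕 (schwartzMul κ ψ) x = ∫ w, 𝓕 κ w * 𝓕 ψ (x - w) := by
  have h1 : ∀ (φ : SchwartzMap (Rn n) ℂ) (z : Rn n), 𝓕⁻ φ z = 𝓕 φ (-z) := fun φ z => rfl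
  have h2 : schwartzMul κ ψ = 𝓕 (SchwartzMap.convolution (ContinuousLinearMap.mul ℂ ℂ)
      (𝓕⁻ κ) (𝓕⁻ ψ)) := by
    rw [SchwartzMap.fourier_convolution, fourier_fourierInv_eq, fourier_fourierInv_eq]
  have h3 : 𝓕 (schwartzMul κ ψ) x = 𝓕⁻ (schwartzMul κ ψ) (-x) := by rw [h1, neg_neg]
  rw [h3, h2, fourierInv_fourier_eq, SchwartzMap.convolution_apply, convolution,
    ← integral_neg_eq_self]
  simp only [h1, ContinuousLinearMap.mul_apply', neg_neg]
  refine integral_congr_ae (Filter.Eventually.of_forall fun w => ?_)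
  simp only
  congr 2
  abel

lemma exists_iteratedLineDerivOp_fourier_schwartzMul (l : ℕ) (m : Fin l → Rn n)
    (ψ : SchwartzMap (Rn n) ℂ) : ∃ ψ' : SchwartzMap (Rn n) ℂ, ∂^{m} (𝓕 ψ) = 𝓕 ψ' ∧
      ∀ κ, ∂^{m} (𝓕 (schwartzMul κ ψ)) = 𝓕 (schwartzMul κ ψ') := by
  induction l with
  | zero => exact ⟨ψ, by simp, by simp⟩
  | succ l ih =>
    obtain ⟨ψ', h1, h2⟩ := ih (Fin.tail m)
    refine ⟨-(2 * π * Complex.I) • SchwartzMap.smulLeftCLM ℂ (inner ℝ · (m 0)) ψ', ?_, ?_⟩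
    · rw [iteratedLineDerivOp_succ_left, h1, SchwartzMap.lineDerivOp_fourier_eq]
    · intro κ
      rw [iteratedLineDerivOp_succ_left, h2, SchwartzMap.lineDerivOp_fourier_eq]
      have hg : (inner ℝ · (m 0) : Rn n → ℝ).HasTemperateGrowth := by fun_prop
      congr 1
      ext x
      simp only [schwartzMul_apply, FunLike.coe_smul, Pi.smul_apply,
        SchwartzMap.smulLeftCLM_apply_apply hg, smul_eq_mul, Complex.real_smul]
      ring

lemma lineDerivOp_reflectTranslate (y m : Rn n) (Ψ : SchwartzMap (Rn n) ℂ) :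
    ∂_{m} (reflectTranslate y Ψ) = -reflectTranslate y (∂_{m} Ψ) := by
  ext x
  rw [SchwartzMap.lineDerivOp_apply_eq_fderiv]
  change fderiv ℝ (fun z => Ψ (y - z)) x m = -(fderiv ℝ Ψ (y - x) m)
  have h : HasFDerivAt (fun z => Ψ (y - z))
      ((fderiv ℝ Ψ (y - x)).comp (-(ContinuousLinearMap.id ℝ (Rn n)))) x :=
    (Ψ.differentiableAt (x := y - x)).hasFDerivAt.comp x ((hasFDerivAt_id x).const_sub y)
  rw [h.fderiv]
  simp

lemma iteratedLineDerivOp_reflectTranslate (l : ℕ) (m : Fin l → Rn n) (y : Rn n)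
    (Ψ : SchwartzMap (Rn n) ℂ) :
    ∂^{m} (reflectTranslate y Ψ) = ((-1 : ℂ) ^ l) • reflectTranslate y (∂^{m} Ψ) := by
  induction l with
  | zero => simp
  | succ l ih =>
    rw [iteratedLineDerivOp_succ_left, ih, lineDerivOp_smul, lineDerivOp_reflectTranslate,
      iteratedLineDerivOp_succ_left, pow_succ]
    simp

/-- Convolution with the Fourier transform of a product is an iterated convolution. -/
lemma distConv_fourier_schwartzMul (κ ψ : SchwartzMap (Rn n) ℂ) (f : TemperedDist n) (y : Rn n) :
    distConv (𝓕 (schwartzMul κ ψ)) f y = ∫ w, 𝓕 κ w * distConv (𝓕 ψ) f (y - w) := by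
  refine map_integral_of_iteratedFDeriv f (fun w => 𝓕 κ w)
    (fun w => reflectTranslate (y - w) (𝓕 ψ)) _
    (𝓕 κ).continuous
    ((continuous_reflectTranslate (𝓕 ψ)).comp (continuous_const.sub continuous_id)) ?_ ?_
  · intro k l
    set C := 2 ^ k * (Finset.Iic (k, l)).sup (fun m => SchwartzMap.seminorm ℂ m.1 m.2) (𝓕 ψ)
      with hC
    have hC0 : 0 ≤ C := by positivity
    refine ⟨fun w => (1 + ‖y‖) ^ k * C * (2 ^ (k - 1)) *
      (‖w‖ ^ 0 * ‖𝓕 κ w‖ + ‖w‖ ^ k * ‖𝓕 κ w‖),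
      (((𝓕 κ).integrable_pow_mul volume 0).add ((𝓕 κ).integrable_pow_mul volume k)).const_mul _,
      fun w => ?_⟩
    have h1 := seminorm_reflectTranslate_le k l (y - w) (𝓕 ψ)
    rw [← hC] at h1
    have h2 : 1 + ‖y - w‖ ≤ (1 + ‖y‖) * (1 + ‖w‖) := by
      nlinarith [norm_sub_le y w, norm_nonneg y, norm_nonneg w]
    have h3 : (1 + ‖w‖) ^ k ≤ 2 ^ (k - 1) * (1 ^ k + ‖w‖ ^ k) :=
      add_pow_le zero_le_one (norm_nonneg w) k
    calc ‖𝓕 κ w‖ * SchwartzMap.seminorm ℂ k l (reflectTranslate (y - w) (𝓕 ψ))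
        ≤ ‖𝓕 κ w‖ * (((1 + ‖y‖) * (1 + ‖w‖)) ^ k * C) := by
          gcongr
          exact h1.trans (by gcongr)
      _ = (1 + ‖y‖) ^ k * C * ‖𝓕 κ w‖ * (1 + ‖w‖) ^ k := by rw [mul_pow]; ring
      _ ≤ (1 + ‖y‖) ^ k * C * ‖𝓕 κ w‖ * (2 ^ (k - 1) * (1 ^ k + ‖w‖ ^ k)) := by gcongr
      _ = _ := by simp only [one_pow, pow_zero]; ring
  · intro l x m
    obtain ⟨ψ', h1, h2⟩ := exists_iteratedLineDerivOp_fourier_schwartzMul l m ψ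
    simp only [← SchwartzMap.iteratedLineDerivOp_eq_iteratedFDeriv,
      iteratedLineDerivOp_reflectTranslate, h1, h2, FunLike.coe_smul, Pi.smul_apply,
      reflectTranslate_apply, smul_eq_mul]
    rw [fourier_schwartzMul_apply, ← integral_const_mul]
    refine integral_congr_ae (Filter.Eventually.of_forall fun w => ?_)
    simp only
    rw [sub_right_comm]
    ring

/-- The dilation `φ ↦ φ (2 ^ j ·)` on the Schwartz space. -/
def dilate (j : ℤ) : SchwartzMap (Rn n) ℂ →L[ℂ] SchwartzMap (Rn n) ℂ :=
  SchwartzMap.compCLMOfContinuousLinearEquiv ℂ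
    (ContinuousLinearEquiv.smulLeft (Units.mk0 ((2 : ℝ) ^ j) (by positivity)))

lemma dilate_apply (j : ℤ) (φ : SchwartzMap (Rn n) ℂ) (x : Rn n) :
    dilate j φ x = φ ((2 : ℝ) ^ j • x) := rfl

lemma fourier_dilate_apply (ν : ℕ) (κ : SchwartzMap (Rn n) ℂ) (x : Rn n) :
    𝓕 (dilate (-ν) κ) x = (2 : ℝ) ^ (ν * n) * 𝓕 κ ((2 : ℝ) ^ ν • x) := by
  rw [SchwartzMap.fourier_coe, SchwartzMap.fourier_coe, Real.fourier_eq, Real.fourier_eq]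
  have h := Measure.integral_comp_smul (volume : Measure (Rn n))
    (fun u => Real.fourierChar (-inner ℝ u ((2 : ℝ) ^ ν • x)) • κ u) ((2 : ℝ) ^ (-(ν : ℤ)))
  simp only [dilate_apply]
  have h2 : (2 : ℝ) ^ ν * (2 : ℝ) ^ (-(ν : ℤ)) = 1 := by
    rw [zpow_neg, zpow_natCast]; field_simp
  simp only [inner_smul_left, inner_smul_right, RCLike.conj_to_real, ← mul_assoc, h2, one_mul] at h
  rw [h]
  simp only [inner_smul_right]
  rw [Complex.real_smul]
  congr 1
  simp [pow_mul, abs_of_pos]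

/-- A multiplier vanishing near the origin, rescaled to high frequencies, is rapidly decreasing
as an operator on the Schwartz space. -/
lemma exists_seminorm_le_of_eq_zero_ball (m : Rn n → ℂ) (hm : ContDiff ℝ (⊤ : ℕ∞) m)
    (hb : ∀ i : ℕ, ∃ B, ∀ x, ‖iteratedFDeriv ℝ i m x‖ ≤ B) (r : ℝ) (hr : 0 < r)
    (h0 : ∀ x, ‖x‖ < r → m x = 0) (θ : SchwartzMap (Rn n) ℂ) (k l M : ℕ) :
    ∃ C, 0 ≤ C ∧ ∀ (s : ℝ) (g : SchwartzMap (Rn n) ℂ), 0 ≤ s → s ≤ 1 →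
      (∀ x, g x = m (s • x) * θ x) → SchwartzMap.seminorm ℂ k l g ≤ C * s ^ M := by
  choose B hB using hb
  have hB0 : ∀ i, 0 ≤ B i := fun i => (norm_nonneg _).trans (hB i 0)
  have hS : 0 ≤ (r⁻¹) ^ M * ∑ i ∈ Finset.range (l + 1), (l.choose i : ℝ) * B i *
      SchwartzMap.seminorm ℂ (k + M) (l - i) θ :=
    mul_nonneg (by positivity) (Finset.sum_nonneg fun i _ =>
      mul_nonneg (mul_nonneg (by positivity) (hB0 i)) (apply_nonneg _ _))
  refine ⟨_, hS, fun s g hs hs1 hg => ?_⟩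
  refine SchwartzMap.seminorm_le_bound ℂ k l g (mul_nonneg hS (by positivity)) fun x => ?_
  have hgf : (g : Rn n → ℂ) = fun x => m (s • x) * θ x := funext hg
  rcases lt_or_ge ‖s • x‖ r with hx | hx
  · have hev : (g : Rn n → ℂ) =ᶠ[nhds x] fun _ => 0 := by
      have : ∀ᶠ z in nhds x, ‖s • z‖ < r :=
        (continuous_const_smul s).norm.continuousAt.eventually_lt continuousAt_const hx
      filter_upwards [this] with z hz
      rw [hg, h0 _ hz, zero_mul]
    rw [(hev.iteratedFDeriv ℝ l).eq_of_nhds]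
    simpa [iteratedFDeriv_fun_zero] using mul_nonneg hS (pow_nonneg hs M)
  · have hm' : ContDiff ℝ (⊤ : ℕ∞) fun x : Rn n => m (s • x) := hm.comp (contDiff_const_smul s)
    have h1 := norm_iteratedFDeriv_mul_le (N := (⊤ : ℕ∞)) (n := l) hm' (θ.smooth ⊤) x
      (by exact_mod_cast le_top)
    rw [hgf]
    have h2 : ∀ i, ‖iteratedFDeriv ℝ i (fun x : Rn n => m (s • x)) x‖ ≤ B i := fun i => by
      rw [iteratedFDeriv_comp_const_smul s (hm.of_le (by exact_mod_cast le_top)), norm_smul,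
        norm_pow, Real.norm_of_nonneg hs]
      calc s ^ i * ‖iteratedFDeriv ℝ i m (s • x)‖ ≤ 1 * B i := by
            gcongr
            · exact pow_le_one₀ hs hs1
            · exact hB i _
        _ = B i := one_mul _
    have h3 : 1 ≤ (r⁻¹ * (s * ‖x‖)) ^ M := by
      refine one_le_pow₀ ?_
      rw [norm_smul, Real.norm_of_nonneg hs] at hx
      rw [← div_eq_inv_mul, le_div_iff₀ hr]
      linarith
    calc ‖x‖ ^ k * ‖iteratedFDeriv ℝ l (fun x => m (s • x) * θ x) x‖
        ≤ ‖x‖ ^ k * ∑ i ∈ Finset.range (l + 1), (l.choose i : ℝ) *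
          ‖iteratedFDeriv ℝ i (fun x : Rn n => m (s • x)) x‖ *
            ‖iteratedFDeriv ℝ (l - i) θ x‖ := by gcongr
      _ ≤ (r⁻¹ * (s * ‖x‖)) ^ M * (‖x‖ ^ k * ∑ i ∈ Finset.range (l + 1), (l.choose i : ℝ) *
          B i * ‖iteratedFDeriv ℝ (l - i) θ x‖) := by
          refine le_trans ?_ (le_mul_of_one_le_left ?_ h3)
          · gcongr; exact h2 _
          · exact mul_nonneg (by positivity) (Finset.sum_nonneg fun i _ =>
              mul_nonneg (mul_nonneg (by positivity) (hB0 i)) (norm_nonneg _))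
      _ = (r⁻¹) ^ M * (∑ i ∈ Finset.range (l + 1), (l.choose i : ℝ) * B i *
          (‖x‖ ^ (k + M) * ‖iteratedFDeriv ℝ (l - i) θ x‖)) * s ^ M := by
          simp only [Finset.mul_sum, Finset.sum_mul]
          refine Finset.sum_congr rfl fun i _ => ?_
          rw [mul_pow, mul_pow, pow_add]; ring
      _ ≤ _ := by
          gcongr with i hi
          · exact mul_nonneg (by positivity) (hB0 i)
          · exact SchwartzMap.le_seminorm ℂ (k + M) (l - i) θ x

lemma exists_le_of_continuous_seminorm (q : Seminorm ℂ (SchwartzMap (Rn n) ℂ)) (hq : Continuous q)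
    {ι : Type*} (g : ι → SchwartzMap (Rn n) ℂ) (b : ι → ℝ) (hb : ∀ i, 0 ≤ b i)
    (hg : ∀ k l : ℕ, ∃ C, 0 ≤ C ∧ ∀ i, SchwartzMap.seminorm ℂ k l (g i) ≤ C * b i) :
    ∃ C, 0 ≤ C ∧ ∀ i, q (g i) ≤ C * b i := by
  obtain ⟨s, C, -, hC⟩ := Seminorm.bound_of_continuous (schwartz_withSeminorms ℂ (Rn n) ℂ) q hq
  choose D hD0 hD using hg
  refine ⟨C * ∑ i ∈ s, D i.1 i.2, mul_nonneg C.2 (Finset.sum_nonneg fun i _ => hD0 _ _),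
    fun i => ?_⟩
  refine (hC (g i)).trans ?_
  simp only [smul_apply, NNReal.smul_def, smul_eq_mul]
  rw [mul_assoc]
  gcongr
  rw [Finset.sum_mul]
  refine Seminorm.finset_sup_apply_le
    (Finset.sum_nonneg fun j _ => mul_nonneg (hD0 _ _) (hb i)) fun j hj => ?_
  exact (hD j.1 j.2 i).trans (Finset.single_le_sum (f := fun j : ℕ × ℕ => D j.1 j.2 * b i)
    (fun j _ => mul_nonneg (hD0 _ _) (hb i)) hj)

/-- Decay of the Fourier transform of a family with rapidly decreasing seminorms. -/
lemma exists_norm_fourier_le {ι : Type*} (g : ι → SchwartzMap (Rn n) ℂ) (b : ι → ℝ)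
    (hb : ∀ i, 0 ≤ b i)
    (hg : ∀ k l : ℕ, ∃ C, 0 ≤ C ∧ ∀ i, SchwartzMap.seminorm ℂ k l (g i) ≤ C * b i) (L : ℕ) :
    ∃ C, 0 ≤ C ∧ ∀ i x, ‖𝓕 (g i) x‖ ≤ C * b i * ((1 + ‖x‖) ^ L)⁻¹ := by
  let q : Seminorm ℂ (SchwartzMap (Rn n) ℂ) :=
    ((Finset.Iic (L, 0)).sup fun m => SchwartzMap.seminorm ℂ m.1 m.2).comp
      (SchwartzMap.fourierTransformCLM ℂ).toLinearMap
  have hq : Continuous q := by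
    have h1 : Continuous ⇑((Finset.Iic (L, 0)).sup fun m : ℕ × ℕ =>
        (SchwartzMap.seminorm ℂ m.1 m.2 : Seminorm ℂ (SchwartzMap (Rn n) ℂ))) :=
      Seminorm.continuous_finsetSup fun i _ =>
        (schwartz_withSeminorms ℂ (Rn n) ℂ).continuous_seminorm i
    exact h1.comp (SchwartzMap.fourierTransformCLM ℂ).continuous
  obtain ⟨C, hC0, hC⟩ := exists_le_of_continuous_seminorm q hq g b hb hg
  refine ⟨2 ^ L * C, by positivity, fun i x => ?_⟩
  have h1 := SchwartzMap.one_add_le_sup_seminorm_apply (𝕜 := ℂ) (m := (L, 0)) le_rfl le_rfl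
    (𝓕 (g i)) x
  rw [norm_iteratedFDeriv_zero] at h1
  rw [← div_eq_mul_inv, le_div_iff₀ (by positivity), mul_comm, mul_assoc]
  refine h1.trans ?_
  gcongr
  exact hC i

/-- A smooth compactly supported function equal to `1` near the origin whose dyadic differences
are divisible by `ψ₁`. -/
lemma exists_cutoff_pair (eps k : ℝ) (heps : 0 < eps) (hk1 : 1 < k) (psi1 : SchwartzMap (Rn n) ℂ)
    (hpsi1 : ∀ x : Rn n, eps ≤ ‖x‖ → ‖x‖ ≤ 2 * k * eps → 0 < ‖psi1 x‖) :
    ∃ χ lam : SchwartzMap (Rn n) ℂ, (∀ x, ‖x‖ < eps → χ x = 1) ∧ (∀ x, ‖x‖ < eps → lam x = 0) ∧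
      ∀ x, lam x * psi1 x = χ ((2 : ℝ)⁻¹ • x) - χ x := by
  have hke : eps < k * eps := by nlinarith
  let b : ContDiffBump (0 : Rn n) := ⟨eps, k * eps, heps, hke⟩
  have hb1 : ∀ x : Rn n, ‖x‖ ≤ eps → b x = 1 := fun x hx =>
    b.one_of_mem_closedBall (by simpa [b] using hx)
  have hb0 : ∀ x : Rn n, k * eps ≤ ‖x‖ → b x = 0 := fun x hx =>
    b.zero_of_le_dist (by simpa [b] using hx)
  have hbs : ContDiff ℝ (⊤ : ℕ∞) fun x : Rn n => (b x : ℂ) :=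
    Complex.ofRealCLM.contDiff.comp b.contDiff
  have hbc : HasCompactSupport fun x : Rn n => (b x : ℂ) :=
    b.hasCompactSupport.comp_left (g := fun r : ℝ => (r : ℂ)) (by simp)
  let g : Rn n → ℂ := fun x => (b ((2 : ℝ)⁻¹ • x) : ℂ) - b x
  have hgs : ContDiff ℝ (⊤ : ℕ∞) g := (hbs.comp (contDiff_const_smul (2 : ℝ)⁻¹)).sub hbs
  have hnorm : ∀ x : Rn n, ‖(2 : ℝ)⁻¹ • x‖ = ‖x‖ / 2 := fun x => by
    rw [norm_smul]; norm_num; ring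
  have hg0 : ∀ x : Rn n, ‖x‖ ≤ eps → g x = 0 := fun x hx => by
    have : ‖(2 : ℝ)⁻¹ • x‖ ≤ eps := by rw [hnorm]; linarith [norm_nonneg x]
    simp [g, hb1 _ hx, hb1 _ this]
  have hg1 : ∀ x : Rn n, 2 * k * eps ≤ ‖x‖ → g x = 0 := fun x hx => by
    have h1 : k * eps ≤ ‖(2 : ℝ)⁻¹ • x‖ := by rw [hnorm]; linarith
    have h2 : k * eps ≤ ‖x‖ := by linarith [mul_pos (zero_lt_one.trans hk1) heps]
    simp [g, hb0 _ h1, hb0 _ h2]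
  have hlc : HasCompactSupport fun x => g x / psi1 x := by
    refine HasCompactSupport.of_support_subset_isCompact
      (isCompact_closedBall (0 : Rn n) (2 * k * eps)) fun x hx => ?_
    by_contra h
    refine hx ?_
    simp only [mem_closedBall_zero_iff, not_le] at h
    simp [hg1 x h.le]
  have hls : ContDiff ℝ (⊤ : ℕ∞) fun x => g x / psi1 x := by
    rw [contDiff_iff_contDiffAt]
    intro x
    by_cases hx : psi1 x = 0
    · have hev : (fun x => g x / psi1 x) =ᶠ[nhds x] fun _ => 0 := by
        rcases lt_or_ge ‖x‖ eps with h | h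
        · filter_upwards [continuous_norm.continuousAt.eventually_lt continuousAt_const h]
            with z hz
          simp [hg0 z hz.le]
        · rcases lt_or_ge (2 * k * eps) ‖x‖ with h' | h'
          · filter_upwards [continuousAt_const.eventually_lt continuous_norm.continuousAt h']
              with z hz
            simp [hg1 z hz.le]
          · exact absurd (norm_eq_zero.2 hx) (hpsi1 x h h').ne'
      exact contDiffAt_const.congr_of_eventuallyEq hev
    · simp only [div_eq_mul_inv]
      exact hgs.contDiffAt.mul ((psi1.smooth _).contDiffAt.inv hx)
  refine ⟨hbc.toSchwartzMap hbs, hlc.toSchwartzMap hls, fun x hx => ?_, fun x hx => ?_,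
    fun x => ?_⟩
  · simp [hb1 x hx.le]
  · simp [hg0 x hx.le]
  · change g x / psi1 x * psi1 x = g x
    by_cases hx : psi1 x = 0
    · have : g x = 0 := by
        rcases lt_or_ge ‖x‖ eps with h | h
        · exact hg0 x h.le
        · rcases lt_or_ge (2 * k * eps) ‖x‖ with h' | h'
          · exact hg1 x h'.le
          · exact absurd (norm_eq_zero.2 hx) (hpsi1 x h h').ne'
      simp [this]
    · exact div_mul_cancel₀ _ hx

lemma exists_norm_iteratedFDeriv_le (φ : SchwartzMap (Rn n) ℂ) (i : ℕ) :
    ∃ B, ∀ x, ‖iteratedFDeriv ℝ i φ x‖ ≤ B :=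
  ⟨SchwartzMap.seminorm ℂ 0 i φ, fun x => SchwartzMap.norm_iteratedFDeriv_le_seminorm ℂ φ i x⟩

/-- The low-frequency cut-offs `χ (2 ^ (-J) ·)` act on the Schwartz space as an approximate
identity. -/
lemma tendsto_schwartzMul_dilate (χ θ : SchwartzMap (Rn n) ℂ) (r : ℝ) (hr : 0 < r)
    (hχ : ∀ x, ‖x‖ < r → χ x = 1) :
    Filter.Tendsto (fun J : ℕ => θ - schwartzMul (dilate (-J) χ) θ) Filter.atTop (nhds 0) := by
  rw [(schwartz_withSeminorms ℂ (Rn n) ℂ).tendsto_nhds _ 0]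
  rintro ⟨k, l⟩ ε hε
  have hb : ∀ i : ℕ, ∃ B, ∀ x, ‖iteratedFDeriv ℝ i (fun x => 1 - χ x) x‖ ≤ B := fun i => by
    obtain ⟨B, hB⟩ := exists_norm_iteratedFDeriv_le (-χ) i
    refine ⟨1 + B, fun x => ?_⟩
    have h : (fun x => 1 - χ x) = (fun _ => (1 : ℂ)) + ⇑(-χ) := by
      funext x; simp [sub_eq_add_neg]
    rw [h, iteratedFDeriv_add_apply contDiffAt_const ((-χ).smooth _).contDiffAt]
    refine (norm_add_le _ _).trans (add_le_add ?_ (hB x))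
    rcases Nat.eq_zero_or_pos i with rfl | hi
    · simp
    · simp [iteratedFDeriv_const_of_ne hi.ne']
  obtain ⟨C, hC0, hC⟩ := exists_seminorm_le_of_eq_zero_ball (fun x => 1 - χ x)
    (contDiff_const.sub (χ.smooth ⊤)) hb r hr (fun x hx => by simp [hχ x hx]) θ k l 1
  have hlim : Filter.Tendsto (fun J : ℕ => C * ((2 : ℝ)⁻¹ ^ J) ^ 1) Filter.atTop (nhds 0) := by
    simpa using (tendsto_pow_atTop_nhds_zero_of_lt_one (r := (2 : ℝ)⁻¹) (by norm_num)
      (by norm_num)).const_mul C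
  filter_upwards [hlim.eventually_lt_const hε] with J hJ
  rw [sub_zero]
  refine (hC ((2 : ℝ)⁻¹ ^ J) _ (by positivity) (pow_le_one₀ (by norm_num) (by norm_num))
    fun x => ?_).trans_lt hJ
  rw [_root_.sub_apply, schwartzMul_apply, dilate_apply, zpow_neg, zpow_natCast, inv_pow]
  ring

/-- The kernels reproducing the Littlewood-Paley pieces. -/
def kernel (χ lam θ : SchwartzMap (Rn n) ℂ) (j : ℕ) : SchwartzMap (Rn n) ℂ :=
  if j = 0 then χ else schwartzMul (dilate (1 - j) lam) θ

lemma exists_norm_fourier_kernel_le (χ lam θ : SchwartzMap (Rn n) ℂ) (r : ℝ) (hr : 0 < r)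
    (hlam : ∀ x, ‖x‖ < r → lam x = 0) (M L : ℕ) :
    ∃ C, 0 ≤ C ∧ ∀ j x, ‖𝓕 (kernel χ lam θ j) x‖ ≤ C * (2⁻¹ ^ M) ^ j * ((1 + ‖x‖) ^ L)⁻¹ := by
  refine exists_norm_fourier_le _ (fun j : ℕ => ((2 : ℝ)⁻¹ ^ M) ^ j) (fun j => by positivity)
    (fun k l => ?_) L
  obtain ⟨C, hC0, hC⟩ := exists_seminorm_le_of_eq_zero_ball lam (lam.smooth ⊤)
    (exists_norm_iteratedFDeriv_le lam) r hr hlam θ k l M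
  refine ⟨SchwartzMap.seminorm ℂ k l χ + C * 2 ^ M, by positivity, fun j => ?_⟩
  rcases Nat.eq_zero_or_pos j with rfl | hj
  · simp only [kernel, if_true, pow_zero, mul_one]
    have : 0 ≤ C * 2 ^ M := by positivity
    linarith
  · have h1 : ((2 : ℝ) ^ (1 - j : ℤ)) = 2 * 2⁻¹ ^ j := by
      rw [zpow_sub₀ two_ne_zero, zpow_one, zpow_natCast, inv_pow, div_eq_mul_inv]
    have h := hC ((2 : ℝ) ^ (1 - j : ℤ)) (kernel χ lam θ j) (by positivity)
      (zpow_le_one_of_nonpos₀ one_le_two (by omega)) (fun x => by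
        rw [kernel, if_neg hj.ne', schwartzMul_apply, dilate_apply])
    refine h.trans ?_
    rw [h1, mul_pow, ← pow_mul, ← pow_mul, mul_comm M j, ← mul_assoc]
    gcongr
    simp

/-- Calderon-type telescoping at one frequency level. -/
lemma sum_kernel_mul (χ lam psi1 θ : SchwartzMap (Rn n) ℂ)
    (h : ∀ x, lam x * psi1 x = χ ((2 : ℝ)⁻¹ • x) - χ x) (J : ℕ) (x : Rn n) :
    χ x * θ x + ∑ j ∈ Finset.range J, kernel χ lam θ (j + 1) x *
      psi1 ((2 : ℝ) ^ (-j : ℤ) • x) = χ ((2 : ℝ) ^ (-J : ℤ) • x) * θ x := by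
  induction J with
  | zero => simp
  | succ J ih =>
    rw [Finset.sum_range_succ, ← add_assoc, ih, kernel, if_neg (Nat.succ_ne_zero J),
      schwartzMul_apply, dilate_apply]
    have h1 := h ((2 : ℝ) ^ (-J : ℤ) • x)
    have h2 : (1 - ((J + 1 : ℕ) : ℤ)) = -J := by push_cast; ring
    have h3 : (2 : ℝ)⁻¹ • (2 : ℝ) ^ (-J : ℤ) • x = (2 : ℝ) ^ (-((J + 1 : ℕ)) : ℤ) • x := by
      rw [smul_smul]
      congr 1
      push_cast
      rw [neg_add, zpow_add₀ two_ne_zero, mul_comm]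
      simp
    rw [h2, ← h3]
    linear_combination θ x * h1

/-- `φ ↦ (𝓕 φ ∗ f)(y)` as a continuous linear functional. -/
def distConvFourierCLM (f : TemperedDist n) (y : Rn n) : SchwartzMap (Rn n) ℂ →L[ℂ] ℂ :=
  (f.comp (reflectTranslateCLM y)).comp (SchwartzMap.fourierTransformCLM ℂ)

lemma distConvFourierCLM_apply (f : TemperedDist n) (y : Rn n) (φ : SchwartzMap (Rn n) ℂ) :
    distConvFourierCLM f y φ = distConv (𝓕 φ) f y := rfl

/-- The finite Calderon-type reproducing formula with its remainder. -/
lemma eq_sum_schwartzMul_kernel (ψ : ℕ → SchwartzMap (Rn n) ℂ)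
    (hψ : ∀ j : ℕ, ∀ x, ψ (j + 1) x = ψ 1 ((2 : ℝ) ^ (-j : ℤ) • x))
    (χ lam : SchwartzMap (Rn n) ℂ)
    (h : ∀ x, lam x * ψ 1 x = χ ((2 : ℝ)⁻¹ • x) - χ x) (ν J : ℕ) :
    ψ ν = ∑ j ∈ Finset.range (J + 1),
        schwartzMul (dilate (-ν) (kernel χ lam (dilate ν (ψ ν)) j)) (ψ (j + ν)) +
      dilate (-ν) (dilate ν (ψ ν) - schwartzMul (dilate (-J) χ) (dilate ν (ψ ν))) := by
  ext ξ
  set θ := dilate ν (ψ ν) with hθ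
  have hθξ : θ ((2 : ℝ) ^ (-ν : ℤ) • ξ) = ψ ν ξ := by
    rw [hθ, dilate_apply, smul_smul, ← zpow_add₀ two_ne_zero]
    simp
  have h1 := sum_kernel_mul χ lam (ψ 1) θ h J ((2 : ℝ) ^ (-ν : ℤ) • ξ)
  rw [Finset.sum_range_succ']
  simp only [add_apply, _root_.sub_apply, sum_apply, dilate_apply, schwartzMul_apply, hθξ] at h1 ⊢
  have h2 : ∀ j : ℕ, ψ (j + 1 + ν) ξ = ψ 1 ((2 : ℝ) ^ (-j : ℤ) • (2 : ℝ) ^ (-ν : ℤ) • ξ) := by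
    intro j
    rw [add_right_comm, hψ, smul_smul, ← zpow_add₀ two_ne_zero]
    congr 3
    push_cast
    ring
  have h3 : kernel χ lam θ 0 = χ := rfl
  simp only [h2, h3, zero_add]
  rw [← h1]
  ring

lemma enorm_distConv_fourier_schwartzMul_le (κ ψ : SchwartzMap (Rn n) ℂ) (f : TemperedDist n)
    (y : Rn n) (w : Rn n → ℝ) (hw : ∀ z, ‖𝓕 κ z‖ ≤ w z) :
    ‖distConv (𝓕 (schwartzMul κ ψ)) f y‖ₑ ≤
      ∫⁻ z, ENNReal.ofReal (w (y - z)) * ‖distConv (𝓕 ψ) f z‖ₑ := by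
  rw [distConv_fourier_schwartzMul]
  refine (enorm_integral_le_lintegral_enorm _).trans ?_
  rw [← lintegral_sub_left_eq_self _ y]
  refine lintegral_mono fun z => ?_
  simp only [_root_.sub_sub_cancel, enorm_mul]
  gcongr
  rw [← ofReal_norm]
  exact ENNReal.ofReal_le_ofReal (hw _)

/-- The basic estimate of a Littlewood-Paley piece by the pieces of higher frequency. -/
lemma exists_enorm_distConv_le_tsum (eps k : ℝ) (heps : 0 < eps) (hk1 : 1 < k)
    (ψ : ℕ → SchwartzMap (Rn n) ℂ)
    (hψ1 : ∀ x : Rn n, eps ≤ ‖x‖ → ‖x‖ ≤ 2 * k * eps → 0 < ‖ψ 1 x‖)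
    (hψ : ∀ j : ℕ, ∀ x, ψ (j + 1) x = ψ 1 ((2 : ℝ) ^ (-j : ℤ) • x)) (M L : ℕ) :
    ∃ C : ℝ, 0 ≤ C ∧ ∀ (f : TemperedDist n) (ν : ℕ) (y : Rn n),
      ‖distConv (𝓕 (ψ ν)) f y‖ₑ ≤ ENNReal.ofReal C * ∑' j : ℕ, ENNReal.ofReal ((2⁻¹ ^ M) ^ j) *
        ∫⁻ z, ENNReal.ofReal (2 ^ (ν * n) * ((1 + 2 ^ ν * ‖y - z‖) ^ L)⁻¹) *
          ‖distConv (𝓕 (ψ (j + ν))) f z‖ₑ := by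
  obtain ⟨χ, lam, hχ, hlam, hdiff⟩ := exists_cutoff_pair eps k heps hk1 (ψ 1) hψ1
  obtain ⟨C₀, hC₀0, hC₀⟩ := exists_norm_fourier_kernel_le χ lam (dilate 0 (ψ 0)) eps heps hlam M L
  obtain ⟨C₁, hC₁0, hC₁⟩ := exists_norm_fourier_kernel_le χ lam (dilate 1 (ψ 1)) eps heps hlam M L
  have hθ : ∀ ν : ℕ, dilate (ν + 1 : ℕ) (ψ (ν + 1)) = dilate 1 (ψ 1) := fun ν => by
    ext x
    rw [dilate_apply, dilate_apply, hψ, smul_smul, ← zpow_add₀ two_ne_zero]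
    push_cast
    congr 3
    ring
  have hC : ∀ (ν j : ℕ) (x : Rn n), ‖𝓕 (kernel χ lam (dilate ν (ψ ν)) j) x‖ ≤
      (C₀ + C₁) * (2⁻¹ ^ M) ^ j * ((1 + ‖x‖) ^ L)⁻¹ := by
    intro ν j x
    rcases ν with _ | ν
    · refine (hC₀ j x).trans ?_
      gcongr
      linarith
    · rw [hθ]
      refine (hC₁ j x).trans ?_
      gcongr
      linarith
  refine ⟨C₀ + C₁, by positivity, fun f ν y => ?_⟩
  set S := ENNReal.ofReal (C₀ + C₁) * ∑' j : ℕ, ENNReal.ofReal ((2⁻¹ ^ M) ^ j) *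
        ∫⁻ z, ENNReal.ofReal (2 ^ (ν * n) * ((1 + 2 ^ ν * ‖y - z‖) ^ L)⁻¹) *
          ‖distConv (𝓕 (ψ (j + ν))) f z‖ₑ with hS
  set θ := dilate ν (ψ ν) with hθν
  have hterm : ∀ j : ℕ, ‖distConvFourierCLM f y
      (schwartzMul (dilate (-ν) (kernel χ lam θ j)) (ψ (j + ν)))‖ₑ ≤ ENNReal.ofReal (C₀ + C₁) *
        (ENNReal.ofReal ((2⁻¹ ^ M) ^ j) *
        ∫⁻ z, ENNReal.ofReal (2 ^ (ν * n) * ((1 + 2 ^ ν * ‖y - z‖) ^ L)⁻¹) *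
          ‖distConv (𝓕 (ψ (j + ν))) f z‖ₑ) := by
    intro j
    rw [distConvFourierCLM_apply]
    refine (enorm_distConv_fourier_schwartzMul_le _ _ f y (fun w => ((C₀ + C₁) * (2⁻¹ ^ M) ^ j) *
      (2 ^ (ν * n) * ((1 + 2 ^ ν * ‖w‖) ^ L)⁻¹)) fun w => ?_).trans (le_of_eq ?_)
    · rw [fourier_dilate_apply, norm_mul]
      have h1 := hC ν j ((2 : ℝ) ^ ν • w)
      rw [norm_smul, norm_pow, Real.norm_ofNat] at h1
      have h2 : ‖((2 : ℝ) : ℂ) ^ (ν * n)‖ = 2 ^ (ν * n) := by simp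
      rw [h2]
      calc 2 ^ (ν * n) * ‖𝓕 (kernel χ lam θ j) ((2 : ℝ) ^ ν • w)‖
          ≤ 2 ^ (ν * n) * ((C₀ + C₁) * (2⁻¹ ^ M) ^ j * ((1 + 2 ^ ν * ‖w‖) ^ L)⁻¹) := by gcongr
        _ = _ := by ring
    · rw [← mul_assoc, ← ENNReal.ofReal_mul (by positivity),
        ← lintegral_const_mul' _ _ ENNReal.ofReal_ne_top]
      refine lintegral_congr fun z => ?_
      rw [← mul_assoc (ENNReal.ofReal _), ← ENNReal.ofReal_mul (by positivity)]
  have hrem : Filter.Tendsto (fun J : ℕ => distConvFourierCLM f y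
      (dilate (-ν) (θ - schwartzMul (dilate (-J) χ) θ))) Filter.atTop (nhds 0) := by
    have h1 := (((distConvFourierCLM f y).comp (dilate (-ν))).continuous.tendsto 0).comp
      (tendsto_schwartzMul_dilate χ θ eps heps hχ)
    rw [map_zero] at h1
    exact h1
  have hbound : ∀ J : ℕ, ‖distConv (𝓕 (ψ ν)) f y‖ₑ ≤ S + ‖distConvFourierCLM f y
      (dilate (-ν) (θ - schwartzMul (dilate (-J) χ) θ))‖ₑ := by
    intro J
    rw [← distConvFourierCLM_apply]
    conv_lhs => rw [eq_sum_schwartzMul_kernel ψ hψ χ lam hdiff ν J]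
    rw [map_add, map_sum]
    refine (enorm_add_le _ _).trans ?_
    gcongr
    refine (enorm_sum_le _ _).trans ?_
    refine (Finset.sum_le_sum fun j _ => hterm j).trans ?_
    rw [← Finset.mul_sum, hS]
    gcongr
    exact ENNReal.sum_le_tsum _
  refine ge_of_tendsto' (f := fun J : ℕ => S + ‖distConvFourierCLM f y
      (dilate (-ν) (θ - schwartzMul (dilate (-J) χ) θ))‖ₑ) (x := Filter.atTop) ?_ hbound
  simpa using (hrem.enorm).const_add S

/-- The weight `2 ^ (-σ j) (1 + 2 ^ ν |x - y|) ^ (-β)`. -/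
def dyadicWeight (σ β : ℝ) (j ν : ℕ) (x y : Rn n) : ℝ≥0∞ :=
  (2⁻¹ : ℝ≥0∞) ^ (σ * j) * ENNReal.ofReal (1 + 2 ^ ν * ‖x - y‖) ^ (-β)

lemma one_le_ofReal_one_add (ν : ℕ) (x y : Rn n) :
    1 ≤ ENNReal.ofReal (1 + 2 ^ ν * ‖x - y‖) := by
  rw [ENNReal.one_le_ofReal]
  have : 0 ≤ 2 ^ ν * ‖x - y‖ := by positivity
  linarith

lemma ofReal_one_add_ne_zero (ν : ℕ) (x y : Rn n) :
    ENNReal.ofReal (1 + 2 ^ ν * ‖x - y‖) ≠ 0 :=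
  (zero_lt_one.trans_le (one_le_ofReal_one_add ν x y)).ne'

lemma two_inv_ne_zero : (2⁻¹ : ℝ≥0∞) ≠ 0 := by simp

lemma two_inv_ne_top : (2⁻¹ : ℝ≥0∞) ≠ ⊤ := by simp

lemma two_inv_le_one : (2⁻¹ : ℝ≥0∞) ≤ 1 := ENNReal.inv_le_one.2 one_le_two

lemma measurable_dyadicWeight (σ β : ℝ) (j ν : ℕ) (x : Rn n) :
    Measurable (dyadicWeight σ β j ν x) := by
  unfold dyadicWeight
  fun_prop

lemma dyadicWeight_ne_top (σ β : ℝ) (j ν : ℕ) (x y : Rn n) : dyadicWeight σ β j ν x y ≠ ⊤ :=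
  ENNReal.mul_ne_top (ENNReal.rpow_ne_top_of_ne_zero two_inv_ne_zero two_inv_ne_top)
    (ENNReal.rpow_ne_top_of_ne_zero (ofReal_one_add_ne_zero ν x y) ENNReal.ofReal_ne_top)

lemma dyadicWeight_zero_self (σ β : ℝ) (ν : ℕ) (x : Rn n) : dyadicWeight σ β 0 ν x x = 1 := by
  simp [dyadicWeight]

lemma dyadicWeight_rpow (σ β t : ℝ) (j ν : ℕ) (x y : Rn n) (ht : 0 ≤ t) :
    dyadicWeight σ β j ν x y ^ t = dyadicWeight (σ * t) (β * t) j ν x y := by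
  rw [dyadicWeight, dyadicWeight, ENNReal.mul_rpow_of_nonneg _ _ ht, ← ENNReal.rpow_mul,
    ← ENNReal.rpow_mul]
  congr 2 <;> ring

lemma dyadicWeight_anti {σ σ' β β' : ℝ} (hσ : σ ≤ σ') (hβ : β ≤ β') (j ν : ℕ) (x y : Rn n) :
    dyadicWeight σ' β' j ν x y ≤ dyadicWeight σ β j ν x y := by
  refine mul_le_mul' ?_ ?_
  · exact ENNReal.rpow_le_rpow_of_exponent_ge two_inv_le_one (by gcongr)
  · exact ENNReal.rpow_le_rpow_of_exponent_le (one_le_ofReal_one_add ν x y) (neg_le_neg hβ)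

lemma ofReal_one_add_le_mul (j ν : ℕ) (x y z : Rn n) :
    ENNReal.ofReal (1 + 2 ^ ν * ‖x - z‖) ≤ ENNReal.ofReal (1 + 2 ^ ν * ‖x - y‖) *
      ENNReal.ofReal (1 + 2 ^ (j + ν) * ‖y - z‖) := by
  rw [← ENNReal.ofReal_mul (by positivity)]
  refine ENNReal.ofReal_le_ofReal ?_
  have h1 : ‖x - z‖ ≤ ‖x - y‖ + ‖y - z‖ := norm_sub_le_norm_sub_add_norm_sub x y z
  have h2 : (2 : ℝ) ^ ν ≤ 2 ^ (j + ν) := pow_le_pow_right₀ one_le_two (by omega)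
  have h3 : (2 : ℝ) ^ ν * ‖x - z‖ ≤ 2 ^ ν * ‖x - y‖ + 2 ^ (j + ν) * ‖y - z‖ := by
    calc (2 : ℝ) ^ ν * ‖x - z‖ ≤ 2 ^ ν * (‖x - y‖ + ‖y - z‖) := by gcongr
      _ = 2 ^ ν * ‖x - y‖ + 2 ^ ν * ‖y - z‖ := by ring
      _ ≤ _ := by gcongr
  have h4 : 0 ≤ (2 : ℝ) ^ ν * ‖x - y‖ * (2 ^ (j + ν) * ‖y - z‖) := by positivity
  nlinarith

lemma dyadicWeight_mul_le (σ β : ℝ) (hβ : 0 ≤ β) (i j ν : ℕ) (x y z : Rn n) :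
    dyadicWeight σ β j ν x y * dyadicWeight σ β i (j + ν) y z ≤
      dyadicWeight σ β (i + j) ν x z := by
  rw [dyadicWeight, dyadicWeight, dyadicWeight, mul_mul_mul_comm,
    ← ENNReal.rpow_add _ _ two_inv_ne_zero two_inv_ne_top,
    ← ENNReal.mul_rpow_of_ne_top ENNReal.ofReal_ne_top ENNReal.ofReal_ne_top]
  refine mul_le_mul' (le_of_eq ?_) ?_
  · congr 1; push_cast; ring
  · rw [ENNReal.rpow_neg, ENNReal.rpow_neg, ENNReal.inv_le_inv]
    exact ENNReal.rpow_le_rpow (ofReal_one_add_le_mul j ν x y z) hβ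

/-- The weighted sum of integral means over all frequencies above `ν`. -/
def meanSum (σ β : ℝ) (G : ℕ → Rn n → ℝ≥0∞) (ν : ℕ) (x : Rn n) : ℝ≥0∞ :=
  ∑' j : ℕ, 2 ^ ((j + ν) * n) * ∫⁻ z, dyadicWeight σ β j ν x z * G (j + ν) z

/-- The weighted supremum over all frequencies above `ν`. -/
def maxSup (σ β : ℝ) (F : ℕ → Rn n → ℝ≥0∞) (ν : ℕ) (x : Rn n) : ℝ≥0∞ :=
  ⨆ (j : ℕ) (y : Rn n), dyadicWeight σ β j ν x y * F (j + ν) y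

lemma le_maxSup (σ β : ℝ) (F : ℕ → Rn n → ℝ≥0∞) (j ν : ℕ) (x y : Rn n) :
    dyadicWeight σ β j ν x y * F (j + ν) y ≤ maxSup σ β F ν x :=
  le_iSup₂ (f := fun j y => dyadicWeight σ β j ν x y * F (j + ν) y) j y

lemma self_le_maxSup (σ β : ℝ) (F : ℕ → Rn n → ℝ≥0∞) (ν : ℕ) (x : Rn n) :
    F ν x ≤ maxSup σ β F ν x := by
  have := le_maxSup σ β F 0 ν x x
  rwa [dyadicWeight_zero_self, one_mul, zero_add] at this

lemma dyadicWeight_mul_maxSup_le (σ β : ℝ) (hβ : 0 ≤ β) (F : ℕ → Rn n → ℝ≥0∞) (j ν : ℕ)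
    (x y : Rn n) : dyadicWeight σ β j ν x y * maxSup σ β F (j + ν) y ≤ maxSup σ β F ν x := by
  simp only [maxSup, ENNReal.mul_iSup]
  refine iSup₂_le fun i z => ?_
  rw [← mul_assoc, ← add_assoc]
  exact (mul_le_mul_left (dyadicWeight_mul_le σ β hβ i j ν x y z) _).trans
    (le_maxSup σ β F (i + j) ν x z)

lemma dyadicWeight_mul_meanSum_le (σ β : ℝ) (hβ : 0 ≤ β) (G : ℕ → Rn n → ℝ≥0∞) (j ν : ℕ)
    (x y : Rn n) : dyadicWeight σ β j ν x y * meanSum σ β G (j + ν) y ≤ meanSum σ β G ν x := by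
  rw [meanSum, ← ENNReal.tsum_mul_left]
  have h1 : ∀ i : ℕ, dyadicWeight σ β j ν x y * (2 ^ ((i + (j + ν)) * n) *
      ∫⁻ z, dyadicWeight σ β i (j + ν) y z * G (i + (j + ν)) z) ≤ 2 ^ ((i + j + ν) * n) *
        ∫⁻ z, dyadicWeight σ β (i + j) ν x z * G (i + j + ν) z := by
    intro i
    rw [mul_left_comm, ← lintegral_const_mul' _ _ (dyadicWeight_ne_top _ _ _ _ _ _), ← add_assoc]
    refine mul_le_mul' le_rfl (lintegral_mono fun z => ?_)
    rw [← mul_assoc]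
    exact mul_le_mul' (dyadicWeight_mul_le σ β hβ i j ν x y z) le_rfl
  refine (ENNReal.tsum_le_tsum h1).trans ?_
  exact ENNReal.tsum_comp_le_tsum_of_injective (add_left_injective j)
    (fun i => 2 ^ ((i + ν) * n) * ∫⁻ z, dyadicWeight σ β i ν x z * G (i + ν) z)

lemma meanSum_anti {σ σ' β β' : ℝ} (hσ : σ ≤ σ') (hβ : β ≤ β') (G : ℕ → Rn n → ℝ≥0∞) (ν : ℕ)
    (x : Rn n) : meanSum σ' β' G ν x ≤ meanSum σ β G ν x := by
  unfold meanSum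
  gcongr
  exact dyadicWeight_anti hσ hβ _ _ _ _

lemma meanSum_le_maxSup_mul (σ β t : ℝ) (ht : 0 < t) (ht1 : t ≤ 1) (F : ℕ → Rn n → ℝ≥0∞)
    (hF : ∀ m, Measurable (F m)) (ν : ℕ) (x : Rn n) :
    meanSum σ β F ν x ≤ maxSup σ β F ν x ^ (1 - t) *
      meanSum (σ * t) (β * t) (fun m z => F m z ^ t) ν x := by
  rw [meanSum, meanSum, ← ENNReal.tsum_mul_left]
  refine ENNReal.tsum_le_tsum fun j => ?_
  have hmeas : Measurable fun z => dyadicWeight (σ * t) (β * t) j ν x z * F (j + ν) z ^ t :=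
    (measurable_dyadicWeight _ _ _ _ _).mul ((hF _).pow_const t)
  rw [mul_left_comm, ← lintegral_const_mul _ hmeas]
  refine mul_le_mul' le_rfl (lintegral_mono fun z => ?_)
  rw [← dyadicWeight_rpow σ β t j ν x z ht.le, ← ENNReal.mul_rpow_of_nonneg _ _ ht.le]
  calc dyadicWeight σ β j ν x z * F (j + ν) z
      = (dyadicWeight σ β j ν x z * F (j + ν) z) ^ (1 - t) *
        (dyadicWeight σ β j ν x z * F (j + ν) z) ^ t := by
        rw [← ENNReal.rpow_add_of_nonneg _ _ (by linarith) ht.le]; simp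
    _ ≤ _ := mul_le_mul' (ENNReal.rpow_le_rpow (le_maxSup σ β F j ν x z) (by linarith)) le_rfl

/-- Self-improvement of a reproducing inequality: the weighted supremum is controlled by the
integral means of order `t ≤ 1`, provided that it is finite. -/
lemma maxSup_rpow_le (σ β t : ℝ) (hβ : 0 ≤ β) (ht : 0 < t) (ht1 : t ≤ 1) (C : ℝ≥0∞)
    (F : ℕ → Rn n → ℝ≥0∞) (hF : ∀ m, Measurable (F m))
    (hC : ∀ ν y, F ν y ≤ C * meanSum σ β F ν y) (ν : ℕ) (x : Rn n)
    (hfin : maxSup σ β F ν x ≠ ⊤) :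
    maxSup σ β F ν x ^ t ≤ C * meanSum (σ * t) (β * t) (fun m z => F m z ^ t) ν x := by
  set G : ℕ → Rn n → ℝ≥0∞ := fun m z => F m z ^ t with hG
  set A := maxSup σ β F ν x with hA
  have h1t : 0 ≤ 1 - t := by linarith
  have key : A ≤ A ^ (1 - t) * (C * meanSum (σ * t) (β * t) G ν x) := by
    refine iSup₂_le fun j y => ?_
    have hW : dyadicWeight σ β j ν x y = dyadicWeight σ β j ν x y ^ (1 - t) *
        dyadicWeight (σ * t) (β * t) j ν x y := by
      rw [← dyadicWeight_rpow σ β t j ν x y ht.le, ← ENNReal.rpow_add_of_nonneg _ _ h1t ht.le]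
      simp
    calc dyadicWeight σ β j ν x y * F (j + ν) y
        ≤ dyadicWeight σ β j ν x y * (C * (maxSup σ β F (j + ν) y ^ (1 - t) *
          meanSum (σ * t) (β * t) G (j + ν) y)) := by
          gcongr
          refine (hC _ _).trans ?_
          gcongr
          exact meanSum_le_maxSup_mul σ β t ht ht1 F hF (j + ν) y
      _ = C * ((dyadicWeight σ β j ν x y * maxSup σ β F (j + ν) y) ^ (1 - t) *
          (dyadicWeight (σ * t) (β * t) j ν x y * meanSum (σ * t) (β * t) G (j + ν) y)) := by
          rw [ENNReal.mul_rpow_of_nonneg _ _ h1t]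
          conv_lhs => rw [hW]
          ring
      _ ≤ C * (A ^ (1 - t) * meanSum (σ * t) (β * t) G ν x) := by
          gcongr
          · exact dyadicWeight_mul_maxSup_le σ β hβ F j ν x y
          · exact dyadicWeight_mul_meanSum_le _ _ (by positivity) G j ν x y
      _ = _ := by ring
  rcases eq_or_ne A 0 with h0 | h0
  · rw [h0, ENNReal.zero_rpow_of_pos ht]
    exact zero_le
  · have h2 : A ^ (1 - t) * A ^ t = A := by
      rw [← ENNReal.rpow_add_of_nonneg _ _ h1t ht.le]; simp
    rw [← ENNReal.mul_le_mul_iff_right (a := A ^ (1 - t))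
      (ENNReal.rpow_pos (pos_iff_ne_zero.2 h0) hfin).ne' (ENNReal.rpow_ne_top_of_nonneg h1t hfin), h2]
    exact key

/-- The integral mean estimate of order `t ≤ 1`, with a constant independent of the family. -/
lemma rpow_le_meanSum_of_le_one (σ β t : ℝ) (hβ : 0 ≤ β) (ht : 0 < t) (ht1 : t ≤ 1)
    (C : ℝ≥0∞) (hC0 : C ≠ 0) (F : ℕ → Rn n → ℝ≥0∞) (hF : ∀ m, Measurable (F m))
    (hC : ∀ ν y, F ν y ≤ C * meanSum σ β F ν y) (σ' β' : ℝ) (hσ : σ ≤ σ') (hβ' : β ≤ β')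
    (C' : ℝ≥0∞) (hC'top : C' ≠ ⊤) (hC' : ∀ ν y, F ν y ≤ C' * meanSum σ' β' F ν y)
    (hfin : ∀ ν y, maxSup σ' β' F ν y ≠ ⊤) (ν : ℕ) (x : Rn n) :
    F ν x ^ t ≤ C * meanSum (σ * t) (β * t) (fun m z => F m z ^ t) ν x := by
  set G : ℕ → Rn n → ℝ≥0∞ := fun m z => F m z ^ t with hG
  have h1 : ∀ ν y, F ν y ^ t ≤ C' * meanSum (σ * t) (β * t) G ν y := fun ν y =>
    (ENNReal.rpow_le_rpow (self_le_maxSup σ' β' F ν y) ht.le).trans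
      ((maxSup_rpow_le σ' β' t (hβ.trans hβ') ht ht1 C' F hF hC' ν y (hfin ν y)).trans
        (mul_le_mul_right (meanSum_anti (by gcongr) (by gcongr) G ν y) _))
  rcases eq_or_ne (meanSum (σ * t) (β * t) G ν x) ⊤ with htop | htop
  · rw [htop, ENNReal.mul_top hC0]
    exact le_top
  have h2 : maxSup σ β F ν x ≤ (C' * meanSum (σ * t) (β * t) G ν x) ^ t⁻¹ := by
    refine iSup₂_le fun j y => ?_
    rw [ENNReal.le_rpow_inv_iff ht, ENNReal.mul_rpow_of_nonneg _ _ ht.le,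
      dyadicWeight_rpow σ β t j ν x y ht.le]
    calc dyadicWeight (σ * t) (β * t) j ν x y * F (j + ν) y ^ t
        ≤ dyadicWeight (σ * t) (β * t) j ν x y * (C' * meanSum (σ * t) (β * t) G (j + ν) y) := by
          gcongr; exact h1 _ _
      _ = C' * (dyadicWeight (σ * t) (β * t) j ν x y * meanSum (σ * t) (β * t) G (j + ν) y) := by
          ring
      _ ≤ _ := by
          gcongr
          exact dyadicWeight_mul_meanSum_le _ _ (by positivity) G j ν x y
  have h3 : maxSup σ β F ν x ≠ ⊤ := ne_top_of_le_ne_top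
    (ENNReal.rpow_ne_top_of_nonneg (by positivity) (ENNReal.mul_ne_top hC'top htop)) h2
  exact (ENNReal.rpow_le_rpow (self_le_maxSup σ β F ν x) ht.le).trans
    (maxSup_rpow_le σ β t hβ ht ht1 C F hF hC ν x h3)

/-- Jensen's inequality for a weighted integral. -/
lemma rpow_lintegral_mul_le {α : Type*} [MeasurableSpace α] (μ : Measure α) {k g : α → ℝ≥0∞}
    (hk : Measurable k) (hg : Measurable g) {t : ℝ} (ht : 1 ≤ t) :
    (∫⁻ z, k z * g z ∂μ) ^ t ≤ (∫⁻ z, k z ∂μ) ^ (t - 1) * ∫⁻ z, k z * g z ^ t ∂μ := by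
  have ht0 : 0 < t := by linarith
  have h1 : (0 : ℝ) ≤ 1 - t⁻¹ := sub_nonneg.2 (inv_le_one_of_one_le₀ ht)
  have h2 : (0 : ℝ) ≤ t⁻¹ := by positivity
  have h := ENNReal.lintegral_mul_norm_pow_le (μ := μ) hk.aemeasurable
    (hk.mul (hg.pow_const t)).aemeasurable h1 h2 (sub_add_cancel _ _)
  have h3 : ∀ z, k z ^ (1 - t⁻¹) * (k z * g z ^ t) ^ t⁻¹ = k z * g z := fun z => by
    rw [ENNReal.mul_rpow_of_nonneg _ _ h2, ← mul_assoc, ← ENNReal.rpow_add_of_nonneg _ _ h1 h2,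
      ENNReal.rpow_rpow_inv ht0.ne']
    simp
  simp only [Pi.mul_apply, h3] at h
  refine (ENNReal.rpow_le_rpow h ht0.le).trans (le_of_eq ?_)
  rw [ENNReal.mul_rpow_of_nonneg _ _ ht0.le, ENNReal.rpow_inv_rpow ht0.ne', ← ENNReal.rpow_mul]
  congr 2
  field_simp

lemma rpow_tsum_mul_le (r g : ℕ → ℝ≥0∞) {t : ℝ} (ht : 1 ≤ t) :
    (∑' j, r j * g j) ^ t ≤ (∑' j, r j) ^ (t - 1) * ∑' j, r j * g j ^ t := by
  simpa only [lintegral_count] using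
    rpow_lintegral_mul_le Measure.count (measurable_of_countable r) (measurable_of_countable g) ht

lemma lintegral_kernel_eq (L : ℕ) (hL : n < L) (ν : ℕ) (y : Rn n) :
    ∫⁻ z : Rn n, ENNReal.ofReal (2 ^ (ν * n) * ((1 + 2 ^ ν * ‖y - z‖) ^ L)⁻¹) =
      ENNReal.ofReal (∫ z : Rn n, ((1 + ‖z‖) ^ L)⁻¹) := by
  have hint : Integrable fun z : Rn n => ((1 + ‖z‖) ^ L)⁻¹ := by
    have := integrable_one_add_norm (E := Rn n) (μ := volume) (r := L) (by simpa using hL)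
    refine this.congr (Filter.Eventually.of_forall fun z => ?_)
    simp only [Real.rpow_neg (by positivity : 0 ≤ 1 + ‖z‖), Real.rpow_natCast]
  have h2 : (2 : ℝ) ^ ν ≠ 0 := by positivity
  have hn : ∀ z : Rn n, ‖(2 : ℝ) ^ ν • z‖ = 2 ^ ν * ‖z‖ := fun z => by
    rw [norm_smul, norm_pow, Real.norm_ofNat]
  have hint' : Integrable fun z : Rn n => 2 ^ (ν * n) * ((1 + 2 ^ ν * ‖z‖) ^ L)⁻¹ := by
    simpa only [hn] using (hint.comp_smul h2).const_mul (2 ^ (ν * n))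
  rw [lintegral_sub_left_eq_self
    (fun w => ENNReal.ofReal (2 ^ (ν * n) * ((1 + 2 ^ ν * ‖w‖) ^ L)⁻¹)) y,
    ← ofReal_integral_eq_lintegral_ofReal hint'
      (Filter.Eventually.of_forall fun z => by positivity), integral_const_mul]
  have h := Measure.integral_comp_smul (volume : Measure (Rn n))
    (fun z => ((1 + ‖z‖) ^ L)⁻¹) ((2 : ℝ) ^ ν)
  simp only [hn] at h
  rw [h, finrank_euclideanSpace_fin, ← pow_mul, abs_of_pos (by positivity), smul_eq_mul,
    ← mul_assoc, mul_inv_cancel₀ (by positivity), one_mul]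

lemma dyadicWeight_natCast (M L j ν : ℕ) (x y : Rn n) :
    dyadicWeight M L j ν x y =
      ENNReal.ofReal ((2⁻¹ ^ M) ^ j * ((1 + 2 ^ ν * ‖x - y‖) ^ L)⁻¹) := by
  rw [dyadicWeight, ENNReal.ofReal_mul (by positivity), ← pow_mul,
    ENNReal.ofReal_pow (by positivity), ENNReal.ofReal_inv_of_pos two_pos, ENNReal.ofReal_ofNat,
    ← Nat.cast_mul, ENNReal.rpow_natCast, ENNReal.ofReal_inv_of_pos (by positivity),
    ENNReal.ofReal_pow (by positivity), ENNReal.rpow_neg, ENNReal.rpow_natCast]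

lemma kernel_le_dyadicWeight {σ β : ℝ} {M L : ℕ} (hσ : σ ≤ M) (hβ : β ≤ L) (j ν : ℕ)
    (y z : Rn n) :
    ENNReal.ofReal ((2⁻¹ ^ M) ^ j) *
      ENNReal.ofReal (2 ^ (ν * n) * ((1 + 2 ^ ν * ‖y - z‖) ^ L)⁻¹) ≤
        2 ^ ((j + ν) * n) * dyadicWeight σ β j ν y z := by
  have h : ENNReal.ofReal ((2⁻¹ ^ M) ^ j) *
      ENNReal.ofReal (2 ^ (ν * n) * ((1 + 2 ^ ν * ‖y - z‖) ^ L)⁻¹) =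
        2 ^ (ν * n) * dyadicWeight M L j ν y z := by
    rw [dyadicWeight_natCast, ENNReal.ofReal_mul (by positivity),
      ENNReal.ofReal_mul (by positivity), ENNReal.ofReal_pow (p := 2) (by positivity),
      ENNReal.ofReal_ofNat, mul_left_comm]
  rw [h]
  exact mul_le_mul' (pow_le_pow_right₀ one_le_two (Nat.mul_le_mul_right _ (by omega)))
    (dyadicWeight_anti hσ hβ j ν y z)

lemma tsum_kernel_le_meanSum {σ β : ℝ} {M L : ℕ} (hσ : σ ≤ M) (hβ : β ≤ L)
    (G : ℕ → Rn n → ℝ≥0∞) (ν : ℕ) (y : Rn n) :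
    ∑' j, ENNReal.ofReal ((2⁻¹ ^ M) ^ j) *
      ∫⁻ z, ENNReal.ofReal (2 ^ (ν * n) * ((1 + 2 ^ ν * ‖y - z‖) ^ L)⁻¹) * G (j + ν) z ≤
        meanSum σ β G ν y := by
  refine ENNReal.tsum_le_tsum fun j => ?_
  rw [← lintegral_const_mul' _ _ ENNReal.ofReal_ne_top,
    ← lintegral_const_mul' _ _ (ENNReal.pow_ne_top ENNReal.ofNat_ne_top)]
  refine lintegral_mono fun z => ?_
  rw [← mul_assoc, ← mul_assoc]
  exact mul_le_mul' (kernel_le_dyadicWeight hσ hβ j ν y z) le_rfl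

/-- The integral mean estimate of order `t ≥ 1`. -/
lemma rpow_le_meanSum_of_one_le {σ β t : ℝ} (ht : 1 ≤ t) {M L : ℕ} (hM : 1 ≤ M) (hL : n < L)
    (hσ : σ ≤ M) (hβ : β ≤ L) (C : ℝ≥0∞) (hC : C ≠ ⊤) :
    ∃ c : ℝ≥0∞, c ≠ ⊤ ∧ ∀ F : ℕ → Rn n → ℝ≥0∞, (∀ m, Measurable (F m)) →
      (∀ ν y, F ν y ≤ C * ∑' j, ENNReal.ofReal ((2⁻¹ ^ M) ^ j) *
        ∫⁻ z, ENNReal.ofReal (2 ^ (ν * n) * ((1 + 2 ^ ν * ‖y - z‖) ^ L)⁻¹) * F (j + ν) z) →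
      ∀ ν y, F ν y ^ t ≤ c * meanSum σ β (fun m z => F m z ^ t) ν y := by
  have ht0 : 0 ≤ t := by linarith
  have ht1 : 0 ≤ t - 1 := by linarith
  set R : ℝ≥0∞ := ∑' j : ℕ, ENNReal.ofReal ((2⁻¹ ^ M) ^ j) with hR
  have hRtop : R ≠ ⊤ := by
    have hs : Summable fun j : ℕ => ((2⁻¹ : ℝ) ^ M) ^ j :=
      summable_geometric_of_lt_one (by positivity)
        (pow_lt_one₀ (by norm_num) (by norm_num) (by omega))
    exact hs.tsum_ofReal_ne_top
  set A : ℝ≥0∞ := ENNReal.ofReal (∫ z : Rn n, ((1 + ‖z‖) ^ L)⁻¹) with hA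
  refine ⟨C ^ t * (R ^ (t - 1) * A ^ (t - 1)), ?_, fun F hF hmain ν y => ?_⟩
  · exact ENNReal.mul_ne_top (ENNReal.rpow_ne_top_of_nonneg ht0 hC)
      (ENNReal.mul_ne_top (ENNReal.rpow_ne_top_of_nonneg ht1 hRtop)
        (ENNReal.rpow_ne_top_of_nonneg ht1 ENNReal.ofReal_ne_top))
  have hI : ∀ j : ℕ, (∫⁻ z, ENNReal.ofReal (2 ^ (ν * n) * ((1 + 2 ^ ν * ‖y - z‖) ^ L)⁻¹) *
      F (j + ν) z) ^ t ≤ A ^ (t - 1) *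
        ∫⁻ z, ENNReal.ofReal (2 ^ (ν * n) * ((1 + 2 ^ ν * ‖y - z‖) ^ L)⁻¹) * F (j + ν) z ^ t := by
    intro j
    rw [hA, ← lintegral_kernel_eq L hL ν y]
    exact rpow_lintegral_mul_le volume (by fun_prop) (hF _) ht
  refine (ENNReal.rpow_le_rpow (hmain ν y) ht0).trans ?_
  rw [ENNReal.mul_rpow_of_nonneg _ _ ht0, mul_assoc]
  refine mul_le_mul' le_rfl ((rpow_tsum_mul_le _ _ ht).trans ?_)
  rw [mul_assoc]
  refine mul_le_mul' le_rfl ((ENNReal.tsum_le_tsum fun j => mul_le_mul' le_rfl (hI j)).trans ?_)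
  simp only [mul_left_comm _ (A ^ (t - 1)), ENNReal.tsum_mul_left]
  exact mul_le_mul' le_rfl (tsum_kernel_le_meanSum hσ hβ (fun m z => F m z ^ t) ν y)

lemma exists_le_pow_of_continuous_seminorm (q : Seminorm ℂ (SchwartzMap (Rn n) ℂ))
    (hq : Continuous q) {ι : Type*} (g : ι → SchwartzMap (Rn n) ℂ) (b : ι → ℝ) (hb : ∀ i, 1 ≤ b i)
    (hg : ∀ k l : ℕ, ∃ C, 0 ≤ C ∧ ∃ p : ℕ, ∀ i, SchwartzMap.seminorm ℂ k l (g i) ≤ C * b i ^ p) :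
    ∃ C, 0 ≤ C ∧ ∃ p : ℕ, ∀ i, q (g i) ≤ C * b i ^ p := by
  obtain ⟨s, C, -, hC⟩ := Seminorm.bound_of_continuous (schwartz_withSeminorms ℂ (Rn n) ℂ) q hq
  choose D hD0 P hP using hg
  have hb0 : ∀ i, 0 ≤ b i := fun i => zero_le_one.trans (hb i)
  refine ⟨C * ∑ m ∈ s, D m.1 m.2, mul_nonneg C.2 (Finset.sum_nonneg fun m _ => hD0 _ _),
    s.sup fun m => P m.1 m.2, fun i => ?_⟩
  refine (hC (g i)).trans ?_
  simp only [smul_apply, NNReal.smul_def, smul_eq_mul]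
  rw [mul_assoc]
  gcongr
  have hS : 0 ≤ ∑ m ∈ s, D m.1 m.2 := Finset.sum_nonneg fun m _ => hD0 _ _
  refine Seminorm.finset_sup_apply_le (mul_nonneg hS (pow_nonneg (hb0 i) _)) fun m hm => ?_
  refine (hP m.1 m.2 i).trans (mul_le_mul ?_ ?_ (pow_nonneg (hb0 i) _) hS)
  · exact Finset.single_le_sum (f := fun m : ℕ × ℕ => D m.1 m.2) (fun m _ => hD0 _ _) hm
  · exact pow_le_pow_right₀ (hb i) (Finset.le_sup (f := fun m : ℕ × ℕ => P m.1 m.2) hm)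

lemma seminorm_dilate_neg_le (k l j : ℕ) (φ : SchwartzMap (Rn n) ℂ) :
    SchwartzMap.seminorm ℂ k l (dilate (-(j : ℤ)) φ) ≤
      SchwartzMap.seminorm ℂ k l φ * (2 ^ j) ^ k := by
  refine SchwartzMap.seminorm_le_bound ℂ k l _ (by positivity) fun x => ?_
  set s : ℝ := (2 : ℝ) ^ (-(j : ℤ)) with hs
  have hs0 : 0 < s := by positivity
  have hs1 : s ≤ 1 := zpow_le_one_of_nonpos₀ one_le_two (by simp)
  have hsj : (2 : ℝ) ^ j * s = 1 := by rw [hs, zpow_neg, zpow_natCast]; field_simp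
  have hfun : (dilate (-(j : ℤ)) φ : Rn n → ℂ) = fun x => φ (s • x) := rfl
  rw [hfun, iteratedFDeriv_comp_const_smul s (φ.smooth l), norm_smul, norm_pow,
    Real.norm_of_nonneg hs0.le]
  have hx : ‖x‖ = 2 ^ j * ‖s • x‖ := by
    rw [norm_smul, Real.norm_of_nonneg hs0.le, ← mul_assoc, hsj, one_mul]
  calc ‖x‖ ^ k * (s ^ l * ‖iteratedFDeriv ℝ l φ (s • x)‖)
      ≤ ‖x‖ ^ k * (1 * ‖iteratedFDeriv ℝ l φ (s • x)‖) := by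
        gcongr
        exact pow_le_one₀ hs0.le hs1
    _ = ‖s • x‖ ^ k * ‖iteratedFDeriv ℝ l φ (s • x)‖ * (2 ^ j) ^ k := by
        rw [hx, mul_pow]; ring
    _ ≤ _ := by
        gcongr
        exact SchwartzMap.le_seminorm ℂ k l φ _

/-- Polynomial growth of `Ψ_m ∗ f`, uniformly with respect to the frequency. -/
lemma exists_norm_distConv_le_pow (ψ : ℕ → SchwartzMap (Rn n) ℂ)
    (hψ : ∀ (j : ℕ) x, ψ (j + 1) x = ψ 1 ((2 : ℝ) ^ (-j : ℤ) • x)) (f : TemperedDist n) :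
    ∃ C, 0 ≤ C ∧ ∃ p : ℕ, ∀ (m : ℕ) (y : Rn n),
      ‖distConv (𝓕 (ψ m)) f y‖ ≤ C * (2 ^ m * (1 + ‖y‖)) ^ p := by
  have h2m : ∀ m : ℕ, (1 : ℝ) ≤ 2 ^ m := fun m => one_le_pow₀ one_le_two
  have hψs : ∀ k l : ℕ, ∃ C, 0 ≤ C ∧ ∃ p : ℕ, ∀ m : ℕ,
      SchwartzMap.seminorm ℂ k l (ψ m) ≤ C * (2 ^ m) ^ p := by
    intro k l
    refine ⟨SchwartzMap.seminorm ℂ k l (ψ 0) + SchwartzMap.seminorm ℂ k l (ψ 1), by positivity, k,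
      fun m => ?_⟩
    rcases m with _ | j
    · simp
    · have h : ψ (j + 1) = dilate (-(j : ℤ)) (ψ 1) := SchwartzMap.ext fun x => hψ j x
      rw [h]
      refine (seminorm_dilate_neg_le k l j (ψ 1)).trans ?_
      gcongr
      · simp
      · exact one_le_two
      · omega
  have hF : ∀ k l : ℕ, ∃ C, 0 ≤ C ∧ ∃ p : ℕ, ∀ m : ℕ,
      (Finset.Iic (k, l)).sup (fun i => SchwartzMap.seminorm ℂ i.1 i.2) (𝓕 (ψ m)) ≤
        C * (2 ^ m) ^ p := by
    intro k l
    have hq : Continuous ⇑((Finset.Iic (k, l)).sup fun i : ℕ × ℕ =>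
        (SchwartzMap.seminorm ℂ i.1 i.2 : Seminorm ℂ (SchwartzMap (Rn n) ℂ))) :=
      Seminorm.continuous_finsetSup fun i _ =>
        (schwartz_withSeminorms ℂ (Rn n) ℂ).continuous_seminorm i
    exact exists_le_pow_of_continuous_seminorm
      (((Finset.Iic (k, l)).sup fun i => SchwartzMap.seminorm ℂ i.1 i.2).comp
        (SchwartzMap.fourierTransformCLM ℂ).toLinearMap)
      (by exact hq.comp (SchwartzMap.fourierTransformCLM ℂ).continuous) ψ (fun m => 2 ^ m) h2m hψs
  obtain ⟨C, hC0, p, hC⟩ := exists_le_pow_of_continuous_seminorm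
    ((normSeminorm ℂ ℂ).comp f.toLinearMap) (continuous_norm.comp f.continuous)
    (fun i : ℕ × Rn n => reflectTranslate i.2 (𝓕 (ψ i.1))) (fun i => 2 ^ i.1 * (1 + ‖i.2‖))
    (fun i => one_le_mul_of_one_le_of_one_le (h2m _) (by simp)) (by
      intro k l
      obtain ⟨C, hC0, p, hC⟩ := hF k l
      refine ⟨2 ^ k * C, by positivity, k + p, fun ⟨m, y⟩ => ?_⟩
      refine (seminorm_reflectTranslate_le k l y _).trans ?_
      calc (1 + ‖y‖) ^ k * (2 ^ k *
            (Finset.Iic (k, l)).sup (fun i => SchwartzMap.seminorm ℂ i.1 i.2) (𝓕 (ψ m)))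
          ≤ (2 ^ m * (1 + ‖y‖)) ^ k * (2 ^ k * (C * (2 ^ m * (1 + ‖y‖)) ^ p)) := by
            gcongr
            · exact le_mul_of_one_le_left (by positivity) (h2m m)
            · refine (hC m).trans ?_
              gcongr
              exact le_mul_of_one_le_right (by positivity) (by simp)
        _ = _ := by rw [pow_add]; ring)
  exact ⟨C, hC0, p, fun m y => hC (m, y)⟩

/-- Functions of uniform polynomial growth have finite weighted suprema. -/
lemma maxSup_ne_top (F : ℕ → Rn n → ℝ≥0∞) (C : ℝ) (hC : 0 ≤ C) (p : ℕ)
    (hF : ∀ m y, F m y ≤ ENNReal.ofReal (C * (2 ^ m * (1 + ‖y‖)) ^ p)) {σ β : ℝ} (hσ : p ≤ σ)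
    (hβ : p ≤ β) (ν : ℕ) (x : Rn n) : maxSup σ β F ν x ≠ ⊤ := by
  refine ne_top_of_le_ne_top (b := ENNReal.ofReal (C * (2 ^ ν * (1 + ‖x‖)) ^ p))
    ENNReal.ofReal_ne_top (iSup₂_le fun j y => ?_)
  refine (mul_le_mul' (dyadicWeight_anti hσ hβ j ν x y) (hF _ _)).trans ?_
  rw [dyadicWeight_natCast, ← ENNReal.ofReal_mul (by positivity)]
  refine ENNReal.ofReal_le_ofReal ?_
  have h1 : 1 + ‖y‖ ≤ (1 + ‖x‖) * (1 + 2 ^ ν * ‖x - y‖) := by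
    refine (one_add_norm_le_mul x y).trans ?_
    gcongr
    exact le_mul_of_one_le_left (norm_nonneg _) (one_le_pow₀ one_le_two)
  have h2 : (2 : ℝ)⁻¹ ^ j * 2 ^ j = 1 := by rw [← mul_pow]; norm_num
  calc (2⁻¹ ^ p) ^ j * ((1 + 2 ^ ν * ‖x - y‖) ^ p)⁻¹ * (C * (2 ^ (j + ν) * (1 + ‖y‖)) ^ p)
      ≤ (2⁻¹ ^ p) ^ j * ((1 + 2 ^ ν * ‖x - y‖) ^ p)⁻¹ *
        (C * (2 ^ (j + ν) * ((1 + ‖x‖) * (1 + 2 ^ ν * ‖x - y‖))) ^ p) := by gcongr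
    _ = (2⁻¹ ^ j * 2 ^ j) ^ p * (C * (2 ^ ν * (1 + ‖x‖)) ^ p) := by
        rw [pow_right_comm]
        simp only [mul_pow, pow_add]
        field_simp
    _ = _ := by rw [h2, one_pow, one_mul]

/-- The integral mean estimate for the convolutions `Ψ_ν ∗ f`. -/
lemma exists_enorm_distConv_rpow_le_meanSum (eps k : ℝ) (heps : 0 < eps) (hk1 : 1 < k)
    (ψ : ℕ → SchwartzMap (Rn n) ℂ)
    (hψ1 : ∀ x, eps ≤ ‖x‖ → ‖x‖ ≤ 2 * k * eps → 0 < ‖ψ 1 x‖)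
    (hψ : ∀ (j : ℕ) x, ψ (j + 1) x = ψ 1 ((2 : ℝ) ^ (-j : ℤ) • x)) (σ β t : ℝ) (hβ : 0 ≤ β)
    (ht : 0 < t) :
    ∃ c : ℝ≥0∞, c ≠ ⊤ ∧ ∀ (f : TemperedDist n) (ν : ℕ) (y : Rn n),
      ‖distConv (𝓕 (ψ ν)) f y‖ₑ ^ t ≤
        c * meanSum (σ * t) (β * t) (fun m z => ‖distConv (𝓕 (ψ m)) f z‖ₑ ^ t) ν y := by
  have hmeas : ∀ (f : TemperedDist n) (m : ℕ),
      Measurable fun z => ‖distConv (𝓕 (ψ m)) f z‖ₑ := fun f m =>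
    (continuous_distConv (𝓕 (ψ m)) f).enorm.measurable
  rcases le_total 1 t with ht1 | ht1
  · obtain ⟨C, -, hC⟩ := exists_enorm_distConv_le_tsum eps k heps hk1 ψ hψ1 hψ
      (max 1 ⌈σ * t⌉₊) (max (n + 1) ⌈β * t⌉₊)
    obtain ⟨c, hc, h⟩ := rpow_le_meanSum_of_one_le (n := n) (σ := σ * t) (β := β * t) ht1
      (M := max 1 ⌈σ * t⌉₊) (L := max (n + 1) ⌈β * t⌉₊) (le_max_left _ _)
      (Nat.lt_of_succ_le (le_max_left _ _))
      ((Nat.le_ceil _).trans (Nat.cast_le.2 (le_max_right _ _)))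
      ((Nat.le_ceil _).trans (Nat.cast_le.2 (le_max_right _ _))) (ENNReal.ofReal C)
      ENNReal.ofReal_ne_top
    exact ⟨c, hc, fun f => h _ (hmeas f) (hC f)⟩
  · have hrep : ∀ σ β : ℝ, ∃ C : ℝ≥0∞, C ≠ 0 ∧ C ≠ ⊤ ∧ ∀ (f : TemperedDist n) (ν : ℕ) (y : Rn n),
        ‖distConv (𝓕 (ψ ν)) f y‖ₑ ≤
          C * meanSum σ β (fun m z => ‖distConv (𝓕 (ψ m)) f z‖ₑ) ν y := by
      intro σ β
      obtain ⟨C, -, hC⟩ := exists_enorm_distConv_le_tsum eps k heps hk1 ψ hψ1 hψ ⌈σ⌉₊ ⌈β⌉₊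
      refine ⟨ENNReal.ofReal C + 1, by simp, by simp, fun f ν y => (hC f ν y).trans ?_⟩
      exact mul_le_mul' le_self_add (tsum_kernel_le_meanSum (Nat.le_ceil σ) (Nat.le_ceil β)
        (fun m z => ‖distConv (𝓕 (ψ m)) f z‖ₑ) ν y)
    obtain ⟨C, hC0, hCtop, hC⟩ := hrep σ β
    refine ⟨C, hCtop, fun f ν y => ?_⟩
    obtain ⟨K, hK0, p, hK⟩ := exists_norm_distConv_le_pow ψ hψ f
    obtain ⟨C', -, hC'top, hC'⟩ := hrep (max σ p) (max β p)
    refine rpow_le_meanSum_of_le_one σ β t hβ ht ht1 C hC0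
      (fun m z => ‖distConv (𝓕 (ψ m)) f z‖ₑ) (hmeas f) (hC f) (max σ p) (max β p)
      (le_max_left _ _) (le_max_left _ _) C' hC'top (hC' f) (fun ν y => ?_) ν y
    refine maxSup_ne_top _ K hK0 p (fun m y => ?_) (le_max_right _ _) (le_max_right _ _) ν y
    rw [← ofReal_norm]
    exact ENNReal.ofReal_le_ofReal (hK m y)

lemma one_add_rpow_le_mul (s a : ℝ) (hs : 0 ≤ s) (ha : 0 ≤ a) :
    (1 + s) ^ a ≤ 2 ^ a * (1 + s ^ a) := by
  have hsa : 0 ≤ s ^ a := Real.rpow_nonneg hs a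
  rcases le_total 1 s with h | h
  · calc (1 + s) ^ a ≤ (2 * s) ^ a := Real.rpow_le_rpow (by positivity) (by linarith) ha
      _ = 2 ^ a * s ^ a := Real.mul_rpow zero_le_two hs
      _ ≤ _ := by gcongr; linarith
  · calc (1 + s) ^ a ≤ 2 ^ a := Real.rpow_le_rpow (by positivity) (by linarith) ha
      _ ≤ _ := le_mul_of_one_le_right (by positivity) (by linarith)

lemma one_add_rpow_le_two_mul (s a : ℝ) (hs : 0 ≤ s) (ha : 0 ≤ a) :
    1 + s ^ a ≤ 2 * (1 + s) ^ a := by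
  have h1 : s ^ a ≤ (1 + s) ^ a := Real.rpow_le_rpow hs (by linarith) ha
  have h2 : 1 ≤ (1 + s) ^ a := Real.one_le_rpow (by linarith) ha
  linarith

lemma ofReal_mul_rpow_neg_le {u v b : ℝ} (hu : 0 < u) (hv : 0 < v) (hb : 0 < b) (h : v ≤ b * u)
    (t : ℝ) (ht : 0 ≤ t) :
    (ENNReal.ofReal u ^ t)⁻¹ ≤ ENNReal.ofReal b ^ t * (ENNReal.ofReal v ^ t)⁻¹ := by
  rw [← ENNReal.inv_rpow, ← ENNReal.inv_rpow, ← ENNReal.mul_rpow_of_nonneg _ _ ht,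
    ← ENNReal.ofReal_inv_of_pos hu, ← ENNReal.ofReal_inv_of_pos hv,
    ← ENNReal.ofReal_mul hb.le]
  refine ENNReal.rpow_le_rpow (ENNReal.ofReal_le_ofReal ?_) ht
  rw [inv_le_iff_one_le_mul₀ hu, mul_assoc, mul_left_comm, ← div_eq_inv_mul, one_le_div hv]
  exact h

lemma dyadicWeight_mul_right_eq (σ a t : ℝ) (j ν : ℕ) (x y : Rn n) :
    dyadicWeight σ (a * t) j ν x y =
      (2⁻¹ : ℝ≥0∞) ^ (σ * j) * (ENNReal.ofReal ((1 + 2 ^ ν * ‖x - y‖) ^ a) ^ t)⁻¹ := by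
  rw [dyadicWeight, ← ENNReal.ofReal_rpow_of_pos (by positivity), ← ENNReal.rpow_mul,
    ENNReal.rpow_neg]

lemma peetreMax_rpow_le (a t : ℝ) (ha : 0 ≤ a) (ht : 0 < t) (σ : ℝ) (F : ℕ → Rn n → ℂ)
    (G : ℕ → Rn n → ℝ≥0∞) (c : ℝ≥0∞) (h : ∀ ν y, ‖F ν y‖ₑ ^ t ≤ c * meanSum σ (a * t) G ν y)
    (ν : ℕ) (x : Rn n) :
    peetreMax a ν (F ν) x ^ t ≤
      ENNReal.ofReal (2 ^ a) ^ t * (c * meanSum σ (a * t) G ν x) := by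
  rw [← ENNReal.le_rpow_inv_iff ht]
  refine iSup_le fun y => ?_
  rw [ENNReal.le_rpow_inv_iff ht, ENNReal.div_rpow_of_nonneg _ _ ht.le, div_eq_mul_inv,
    norm_sub_rev y x]
  have hs : 0 ≤ 2 ^ ν * ‖x - y‖ := by positivity
  have h1 := ofReal_mul_rpow_neg_le (by positivity : 0 < 1 + (2 ^ ν * ‖x - y‖) ^ a)
    (by positivity : 0 < (1 + 2 ^ ν * ‖x - y‖) ^ a) (by positivity : (0 : ℝ) < 2 ^ a)
    (one_add_rpow_le_mul _ a hs ha) t ht.le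
  have h0 := dyadicWeight_mul_right_eq σ a t 0 ν x y
  rw [Nat.cast_zero, mul_zero, ENNReal.rpow_zero, one_mul] at h0
  rw [← h0] at h1
  have h2 := dyadicWeight_mul_meanSum_le σ (a * t) (by positivity) G 0 ν x y
  rw [zero_add] at h2
  calc ‖F ν y‖ₑ ^ t * (ENNReal.ofReal (1 + (2 ^ ν * ‖x - y‖) ^ a) ^ t)⁻¹
      ≤ (c * meanSum σ (a * t) G ν y) *
        (ENNReal.ofReal (2 ^ a) ^ t * dyadicWeight σ (a * t) 0 ν x y) := mul_le_mul' (h ν y) h1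
    _ = ENNReal.ofReal (2 ^ a) ^ t *
        (c * (dyadicWeight σ (a * t) 0 ν x y * meanSum σ (a * t) G ν y)) := by ring
    _ ≤ _ := by gcongr

lemma meanSum_le_tsum (N : ℝ) (a t : ℝ) (ha : 0 ≤ a) (ht : 0 < t) (G : ℕ → Rn n → ℝ≥0∞)
    (ν : ℕ) (x : Rn n) :
    meanSum (N * t) (a * t) G ν x ≤ 2 ^ t * ∑' j : ℕ,
      ENNReal.ofReal ((2 : ℝ) ^ (-(j : ℝ) * N * t) * (2 : ℝ) ^ ((j + ν) * n)) *
        ∫⁻ z : Rn n, G (j + ν) z / ENNReal.ofReal ((1 + ((2 : ℝ) ^ ν * ‖x - z‖) ^ a) ^ t) := by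
  rw [meanSum, ← ENNReal.tsum_mul_left]
  refine ENNReal.tsum_le_tsum fun j => ?_
  have hc : ENNReal.ofReal ((2 : ℝ) ^ (-(j : ℝ) * N * t) * (2 : ℝ) ^ ((j + ν) * n)) =
      2 ^ ((j + ν) * n) * (2⁻¹ : ℝ≥0∞) ^ (N * t * j) := by
    rw [ENNReal.ofReal_mul (by positivity), ENNReal.ofReal_pow zero_le_two,
      ← ENNReal.ofReal_rpow_of_pos two_pos, ENNReal.ofReal_ofNat, ENNReal.inv_rpow,
      ← ENNReal.rpow_neg, mul_comm]
    congr 2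
    ring
  have h2 : (2⁻¹ : ℝ≥0∞) ^ (N * t * j) ≠ ⊤ :=
    ENNReal.rpow_ne_top_of_ne_zero two_inv_ne_zero two_inv_ne_top
  have h3 : (2 : ℝ≥0∞) ^ t ≠ ⊤ := ENNReal.rpow_ne_top_of_nonneg ht.le ENNReal.ofNat_ne_top
  rw [hc, mul_left_comm, mul_assoc, ← lintegral_const_mul' _ _ h3,
    ← lintegral_const_mul' _ _ h2]
  refine mul_le_mul' le_rfl (lintegral_mono fun z => ?_)
  have hs : 0 ≤ 2 ^ ν * ‖x - z‖ := by positivity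
  have h1 := ofReal_mul_rpow_neg_le (by positivity : 0 < (1 + 2 ^ ν * ‖x - z‖) ^ a)
    (by positivity : 0 < 1 + (2 ^ ν * ‖x - z‖) ^ a) two_pos
    (one_add_rpow_le_two_mul _ a hs ha) t ht.le
  rw [ENNReal.ofReal_ofNat] at h1
  rw [dyadicWeight_mul_right_eq, mul_assoc, div_eq_mul_inv,
    ← ENNReal.ofReal_rpow_of_pos (by positivity : 0 < 1 + (2 ^ ν * ‖x - z‖) ^ a)]
  refine mul_le_mul' le_rfl ((mul_le_mul' h1 (le_refl (G (j + ν) z))).trans_eq ?_)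
  ring

end

/-- the pointwise estimate for the Peetre maximal function in terms of
integral means of the convolutions `Ψ_{j+ν} ∗ f` (Ullrich's estimate (2.66)). -/
theorem statement14 (n : ℕ) (eps k : ℝ) (heps : 0 < eps) (hk1 : 1 < k) (hk2 : k ≤ 2)
    (psi0 psi1 : SchwartzMap (Rn n) ℂ)
    (hpsi0 : ∀ x : Rn n, ‖x‖ ≤ k * eps → 0 < ‖psi0 x‖)
    (hpsi1 : ∀ x : Rn n, eps ≤ ‖x‖ → ‖x‖ ≤ 2 * k * eps → 0 < ‖psi1 x‖)
    (psis : ℕ → SchwartzMap (Rn n) ℂ)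
    (hpsis0 : psis 0 = psi0) (hpsis1 : psis 1 = psi1)
    (hpsis : ∀ j : ℕ, 2 ≤ j → ∀ x : Rn n, psis j x = psi1 ((2 : ℝ) ^ (-(j : ℝ) + 1) • x))
    (t : ℝ) (ht : 0 < t) (N : ℕ) (a : ℝ) (ha : 0 < a) (haN : a ≤ N) :
    ∃ c : ℝ, 0 < c ∧ ∀ (f : TemperedDist n) (ν : ℕ) (x : Rn n),
      (peetreMax a ν (distConv (SchwartzMap.fourierTransformCLM ℂ (psis ν)) f) x) ^ t ≤
        ENNReal.ofReal c * ∑' j : ℕ,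
          ENNReal.ofReal ((2 : ℝ) ^ (-(j : ℝ) * N * t) * (2 : ℝ) ^ ((j + ν) * n)) *
            ∫⁻ z : Rn n,
              (‖distConv (SchwartzMap.fourierTransformCLM ℂ (psis (j + ν))) f z‖₊ : ℝ≥0∞) ^ t /
                ENNReal.ofReal ((1 + ((2 : ℝ) ^ ν * ‖x - z‖) ^ a) ^ t) := by
  have hψ : ∀ (j : ℕ) x, psis (j + 1) x = psis 1 ((2 : ℝ) ^ (-j : ℤ) • x) := by
    intro j x
    rcases Nat.eq_zero_or_pos j with rfl | hj
    · simp
    · rw [hpsis (j + 1) (by omega) x, hpsis1, ← Real.rpow_intCast]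
      congr 3
      push_cast
      ring
  obtain ⟨c, hc, h⟩ := exists_enorm_distConv_rpow_le_meanSum eps k heps hk1 psis
    (by rwa [hpsis1]) hψ N a t ha.le ht
  set c' : ℝ≥0∞ := ENNReal.ofReal (2 ^ a) ^ t * (c * 2 ^ t) with hc'
  have hc'top : c' ≠ ⊤ := ENNReal.mul_ne_top
    (ENNReal.rpow_ne_top_of_nonneg ht.le ENNReal.ofReal_ne_top)
    (ENNReal.mul_ne_top hc (ENNReal.rpow_ne_top_of_nonneg ht.le ENNReal.ofNat_ne_top))
  refine ⟨c'.toReal + 1, by positivity, fun f ν x => ?_⟩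
  have h1 := peetreMax_rpow_le a t ha.le ht (N * t)
    (fun m => distConv (SchwartzMap.fourierTransformCLM ℂ (psis m)) f)
    (fun m z => ‖distConv (SchwartzMap.fourierTransformCLM ℂ (psis m)) f z‖ₑ ^ t) c (h f) ν x
  refine (h1.trans (mul_le_mul' le_rfl
    (mul_le_mul' le_rfl (meanSum_le_tsum N a t ha.le ht _ ν x)))).trans ?_
  rw [← mul_assoc c, ← mul_assoc, ← hc']
  refine mul_le_mul' ?_ le_rfl
  rw [ENNReal.ofReal_add ENNReal.toReal_nonneg zero_le_one, ENNReal.ofReal_toReal hc'top]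
  exact le_self_add

end
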